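/- arXiv:1007.4633 — 5 statements merged into one kernel-verified Lean document; each statement's English description precedes it below -/
import Mathlib

section
/- For every λ < 0, (1/(2π)) ∫_{-∞}^∞ e^{-iλu} / log(-iu) du = -e^{λ}, where log denotes the principal branch of the complex logarithm and the integral is understood as an improper Riemann integral along the real axis. -/
open Filter Complex

/-!
Substituting `u ↦ -u` turns the integral into that of `exp (lam * z) / log z` along the imaginary
axis. Close the segment of integration by a box in the right half-plane. Since `1 / log z → 0` at
infinity and `lam < 0`, Jordan's lemma makes the other three sides negligible, so that only the pole
at `1` contributes. It is simple with residue `exp lam`, because `log z = (z - 1) * dslope log 1 z`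
with `dslope log 1 1 = 1`.

The residue theorem for these boxes needs no explicit antiderivative of `(z - a)⁻¹`: subtracting
the reflection `(z + conj a)⁻¹`, which is holomorphic on the right half-plane, leaves a kernel that
is negligible on the three sides and equals `-2π` times a Cauchy density on the axis.
-/

section RightHalfPlane

open Bornology MeasureTheory ProbabilityTheory Topology
open scoped ComplexConjugate

variable {E : Type*} [NormedAddCommGroup E] {f g : ℂ → E} {T : ℝ}

lemma le_norm_ofReal_add_mul_I_of_abs_eq (x : ℝ) {s : ℝ} (hs : |s| = T) :
    T ≤ ‖(x + s * I : ℂ)‖ := by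
  simpa [hs] using abs_im_le_norm (x + s * I : ℂ)

lemma le_norm_ofReal_add_mul_I (T y : ℝ) : T ≤ ‖(T + y * I : ℂ)‖ := by
  simpa using re_le_norm (T + y * I : ℂ)

lemma intervalIntegrable_horizontal (hf : ContinuousOn f {z | 0 ≤ z.re ∧ T ≤ ‖z‖}) (hT : 0 ≤ T)
    {s : ℝ} (hs : |s| = T) : IntervalIntegrable (fun x : ℝ => f (x + s * I)) volume 0 T := by
  refine (hf.comp (by fun_prop) fun x hx => ?_).intervalIntegrable
  rw [Set.uIcc_of_le hT] at hx
  exact ⟨by simpa using hx.1, le_norm_ofReal_add_mul_I_of_abs_eq x hs⟩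

lemma intervalIntegrable_vertical (hf : ContinuousOn f {z | 0 ≤ z.re ∧ T ≤ ‖z‖}) (hT : 0 ≤ T)
    (a b : ℝ) : IntervalIntegrable (fun y : ℝ => f (T + y * I)) volume a b :=
  (hf.comp (by fun_prop) fun y _ =>
    ⟨by simpa using hT, le_norm_ofReal_add_mul_I T y⟩).intervalIntegrable

variable [NormedSpace ℂ E]

/-- The integral of `f` along the part of the boundary of the box `[0, T] × [-T, T]` off the
imaginary axis, run through counterclockwise from `-T * I` to `T * I`: the contour that closes the
segment `[-T * I, T * I]` in the right half-plane. The lower side is written with `(-T : ℝ)` so that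
both horizontal sides have the form `x + s * I` with `|s| = T`. -/
noncomputable def boxArcIntegral (f : ℂ → E) (T : ℝ) : E :=
  (∫ x in (0 : ℝ)..T, f (x + (-T : ℝ) * I)) - (∫ x in (0 : ℝ)..T, f (x + T * I)) +
    I • ∫ y in (-T)..T, f (T + y * I)

lemma boxArcIntegral_add (hf : ContinuousOn f {z | 0 ≤ z.re ∧ T ≤ ‖z‖})
    (hg : ContinuousOn g {z | 0 ≤ z.re ∧ T ≤ ‖z‖}) (hT : 0 ≤ T) :
    boxArcIntegral (fun z => f z + g z) T = boxArcIntegral f T + boxArcIntegral g T := by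
  have hbot : |-T| = T := by rw [abs_neg, abs_of_nonneg hT]
  have htop : |T| = T := abs_of_nonneg hT
  simp only [boxArcIntegral]
  rw [intervalIntegral.integral_add (intervalIntegrable_horizontal hf hT hbot)
      (intervalIntegrable_horizontal hg hT hbot),
    intervalIntegral.integral_add (intervalIntegrable_horizontal hf hT htop)
      (intervalIntegrable_horizontal hg hT htop),
    intervalIntegral.integral_add (intervalIntegrable_vertical hf hT _ _)
      (intervalIntegrable_vertical hg hT _ _), smul_add]
  abel

lemma boxArcIntegral_congr (h : ∀ z : ℂ, 0 ≤ z.re → T ≤ ‖z‖ → f z = g z) (hT : 0 ≤ T) :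
    boxArcIntegral f T = boxArcIntegral g T := by
  have hhor : ∀ s : ℝ, |s| = T →
      ∫ x in (0 : ℝ)..T, f (x + s * I) = ∫ x in (0 : ℝ)..T, g (x + s * I) := fun s hs =>
    intervalIntegral.integral_congr fun x hx => by
      rw [Set.uIcc_of_le hT] at hx
      exact h _ (by simpa using hx.1) (le_norm_ofReal_add_mul_I_of_abs_eq x hs)
  have hver : ∀ y : ℝ, f (T + y * I) = g (T + y * I) := fun y =>
    h _ (by simpa using hT) (le_norm_ofReal_add_mul_I T y)
  simp only [boxArcIntegral, hver, hhor T (abs_of_nonneg hT),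
    hhor (-T) (by rw [abs_neg, abs_of_nonneg hT])]

lemma boxArcIntegral_smul_const [CompleteSpace E] (k : ℂ → ℂ) (c : E) (T : ℝ) :
    boxArcIntegral (fun z => k z • c) T = boxArcIntegral k T • c := by
  simp only [boxArcIntegral, intervalIntegral.integral_smul_const, add_smul, sub_smul, smul_assoc]

lemma norm_boxArcIntegral_le {m : ℝ → ℝ} (hm : IntervalIntegrable m volume 0 T) (hT : 0 ≤ T)
    (hf : ∀ z : ℂ, 0 ≤ z.re → T ≤ ‖z‖ → ‖f z‖ ≤ m z.re) :
    ‖boxArcIntegral f T‖ ≤ 2 * (∫ x in (0 : ℝ)..T, m x) + 2 * T * m T := by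
  have hhor : ∀ s : ℝ, |s| = T →
      ‖∫ x in (0 : ℝ)..T, f (x + s * I)‖ ≤ ∫ x in (0 : ℝ)..T, m x := fun s hs =>
    intervalIntegral.norm_integral_le_of_norm_le hT
      (.of_forall fun x hx => by
        simpa using hf (x + s * I) (by simpa using hx.1.le)
          (le_norm_ofReal_add_mul_I_of_abs_eq x hs))
      hm
  have hver : ‖∫ y in (-T)..T, f (T + y * I)‖ ≤ m T * |T - -T| :=
    intervalIntegral.norm_integral_le_of_norm_le_const fun y _ => by
      simpa using hf (T + y * I) (by simpa using hT) (le_norm_ofReal_add_mul_I T y)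
  have hlen : |T - -T| = 2 * T := by rw [abs_of_nonneg] <;> linarith
  calc ‖boxArcIntegral f T‖
      ≤ ‖∫ x in (0 : ℝ)..T, f (x + (-T : ℝ) * I)‖ + ‖∫ x in (0 : ℝ)..T, f (x + T * I)‖ +
          ‖I • ∫ y in (-T)..T, f (T + y * I)‖ :=
        (norm_add_le _ _).trans (by gcongr; exact norm_sub_le _ _)
    _ ≤ (∫ x in (0 : ℝ)..T, m x) + (∫ x in (0 : ℝ)..T, m x) + m T * |T - -T| := by
        rw [norm_smul, norm_I, one_mul]
        gcongr
        · exact hhor _ (by rw [abs_neg, abs_of_nonneg hT])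
        · exact hhor _ (abs_of_nonneg hT)
    _ = 2 * (∫ x in (0 : ℝ)..T, m x) + 2 * T * m T := by rw [hlen]; ring

lemma eventually_forall_le_norm_of_eventually_cobounded {p : ℂ → Prop}
    (h : ∀ᶠ z in cobounded ℂ ⊓ 𝓟 {z | 0 ≤ z.re}, p z) :
    ∀ᶠ T : ℝ in atTop, ∀ z : ℂ, 0 ≤ z.re → T ≤ ‖z‖ → p z := by
  rw [eventually_inf_principal, ← comap_norm_atTop] at h
  filter_upwards [eventually_forall_ge_atTop.2 (eventually_comap.1 h)] with T hT z hz hTz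
  exact hT _ hTz z rfl hz

theorem tendsto_boxArcIntegral_of_tendsto_smul
    (hf : Tendsto (fun z => z • f z) (cobounded ℂ ⊓ 𝓟 {z | 0 ≤ z.re}) (𝓝 0)) :
    Tendsto (boxArcIntegral f) atTop (𝓝 0) := by
  rw [NormedAddGroup.tendsto_nhds_zero] at hf ⊢
  intro ε hε
  filter_upwards [eventually_forall_le_norm_of_eventually_cobounded (hf (ε / 5) (by positivity)),
    eventually_gt_atTop 0] with T hsmall hT
  have hbound : ∀ z : ℂ, 0 ≤ z.re → T ≤ ‖z‖ → ‖f z‖ ≤ ε / 5 / T := fun z hz hTz => by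
    rw [le_div_iff₀ hT, mul_comm]
    calc T * ‖f z‖ ≤ ‖z‖ * ‖f z‖ := by gcongr
      _ = ‖z • f z‖ := (norm_smul _ _).symm
      _ ≤ ε / 5 := (hsmall z hz hTz).le
  calc ‖boxArcIntegral f T‖ ≤ 2 * (∫ _ in (0 : ℝ)..T, ε / 5 / T) + 2 * T * (ε / 5 / T) :=
        norm_boxArcIntegral_le (m := fun _ => ε / 5 / T) intervalIntegrable_const hT.le hbound
    _ = 4 / 5 * ε := by
        rw [intervalIntegral.integral_const, smul_eq_mul]
        field_simp
        ring
    _ < ε := by linarith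

lemma integral_exp_mul_le_neg_inv {lam : ℝ} (hlam : lam < 0) (T : ℝ) :
    ∫ x in (0 : ℝ)..T, Real.exp (lam * x) ≤ (-lam)⁻¹ := by
  rw [intervalIntegral.integral_comp_mul_left (fun x => Real.exp x) hlam.ne, integral_exp,
    smul_eq_mul, mul_zero, Real.exp_zero, inv_neg]
  nlinarith [Real.exp_pos (lam * T), inv_lt_zero.2 hlam]

lemma mul_exp_mul_le_neg_inv {lam : ℝ} (hlam : lam < 0) (T : ℝ) :
    T * Real.exp (lam * T) ≤ (-lam)⁻¹ := by
  have hlin : -lam * T ≤ Real.exp (-(lam * T)) := by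
    linarith [Real.add_one_le_exp (-(lam * T))]
  rw [Real.exp_neg] at hlin
  rw [← div_inv_eq_mul, div_le_iff₀ (by positivity), le_inv_mul_iff₀ (by linarith)]
  exact hlin

theorem tendsto_boxArcIntegral_exp_smul {lam : ℝ} (hlam : lam < 0)
    (hg : Tendsto g (cobounded ℂ ⊓ 𝓟 {z | 0 ≤ z.re}) (𝓝 0)) :
    Tendsto (boxArcIntegral fun z => exp (lam * z) • g z) atTop (𝓝 0) := by
  rw [NormedAddGroup.tendsto_nhds_zero] at hg ⊢
  intro ε hε
  have hδ : 0 < -lam * ε / 5 := by have := neg_pos.2 hlam; positivity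
  filter_upwards [eventually_forall_le_norm_of_eventually_cobounded (hg _ hδ),
    eventually_ge_atTop 0] with T hsmall hT
  set δ := -lam * ε / 5
  have hbound : ∀ z : ℂ, 0 ≤ z.re → T ≤ ‖z‖ →
      ‖exp (lam * z) • g z‖ ≤ δ * Real.exp (lam * z.re) := fun z hz hTz => by
    rw [norm_smul, norm_exp, re_ofReal_mul, mul_comm]
    gcongr
    exact (hsmall z hz hTz).le
  calc ‖boxArcIntegral (fun z => exp (lam * z) • g z) T‖
      ≤ 2 * (∫ x in (0 : ℝ)..T, δ * Real.exp (lam * x)) + 2 * T * (δ * Real.exp (lam * T)) :=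
        norm_boxArcIntegral_le (m := fun x => δ * Real.exp (lam * x))
          (Continuous.intervalIntegrable (by fun_prop) _ _) hT hbound
    _ = 2 * δ * (∫ x in (0 : ℝ)..T, Real.exp (lam * x)) + 2 * δ * (T * Real.exp (lam * T)) := by
        rw [intervalIntegral.integral_const_mul]
        ring
    _ ≤ 2 * δ * (-lam)⁻¹ + 2 * δ * (-lam)⁻¹ := by
        gcongr
        · exact integral_exp_mul_le_neg_inv hlam T
        · exact mul_exp_mul_le_neg_inv hlam T
    _ = 4 / 5 * ε := by
        have := hlam.ne
        simp only [δ]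
        field_simp
        ring
    _ < ε := by linarith

lemma continuousOn_re_nonneg_of_diffContOnCl (hf : DiffContOnCl ℂ f {z | 0 < z.re}) :
    ContinuousOn f {z | 0 ≤ z.re} := by
  simpa only [closure_setOfPred_lt_re] using hf.continuousOn

lemma continuous_mul_I_of_diffContOnCl (hf : DiffContOnCl ℂ f {z | 0 < z.re}) :
    Continuous fun y : ℝ => f (y * I) :=
  (continuousOn_re_nonneg_of_diffContOnCl hf).comp_continuous (by fun_prop) fun y => by simp

lemma isOpen_re_pos : IsOpen {z : ℂ | 0 < z.re} :=
  isOpen_lt continuous_const continuous_re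

lemma boxArcIntegral_eq_of_diffContOnCl (hf : DiffContOnCl ℂ f {z | 0 < z.re})
    (hT : 0 ≤ T) : boxArcIntegral f T = I • ∫ y in (-T)..T, f (y * I) := by
  have hcont : ContinuousOn f (Set.uIcc 0 T ×ℂ Set.uIcc (-T) T) :=
    (continuousOn_re_nonneg_of_diffContOnCl hf).mono fun z hz => by
      rw [Set.uIcc_of_le hT] at hz
      exact hz.1.1
  have hdiff : DifferentiableOn ℂ f
      (Set.Ioo (min 0 T) (max 0 T) ×ℂ Set.Ioo (min (-T) T) (max (-T) T)) :=
    hf.differentiableOn.mono fun z hz => by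
      rw [min_eq_left hT] at hz
      exact hz.1.1
  have hrect := integral_boundary_rect_eq_zero_of_continuousOn_of_differentiableOn f
    ⟨0, -T⟩ ⟨T, T⟩ hcont hdiff
  simp only [ofReal_zero, zero_add] at hrect
  exact sub_eq_zero.1 hrect

lemma diffContOnCl_dslope [CompleteSpace E] {s : Set ℂ} {a : ℂ} (hf : DiffContOnCl ℂ f s)
    (ha : s ∈ 𝓝 a) : DiffContOnCl ℂ (dslope f a) s :=
  ⟨(differentiableOn_dslope ha).2 hf.differentiableOn,
    (continuousOn_dslope (mem_of_superset ha subset_closure)).2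
      ⟨hf.continuousOn, hf.differentiableAt' ha⟩⟩

/-- The difference of the Cauchy kernels at `a` and at the reflection `-conj a` of `a` in the
imaginary axis: the half-plane Poisson kernel, up to a constant factor on the axis. -/
noncomputable def reflectedCauchyKernel (a z : ℂ) : ℂ :=
  (z - a)⁻¹ - (z + conj a)⁻¹

variable {a : ℂ}

lemma add_conj_ne_zero {z : ℂ} (ha : 0 < a.re) (hz : 0 ≤ z.re) : z + conj a ≠ 0 := by
  intro h
  have hre : z.re + a.re = 0 := by simpa using congrArg re h
  linarith

lemma diffContOnCl_inv_add_conj (ha : 0 < a.re) :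
    DiffContOnCl ℂ (fun z => (z + conj a)⁻¹) {z | 0 < z.re} := by
  refine DiffContOnCl.inv (Differentiable.diffContOnCl (by fun_prop)) fun z hz => ?_
  rw [closure_setOfPred_lt_re] at hz
  exact add_conj_ne_zero ha hz

lemma continuousOn_reflectedCauchyKernel (ha : 0 < a.re) :
    ContinuousOn (reflectedCauchyKernel a) ({z | 0 ≤ z.re} \ {a}) :=
  ContinuousOn.sub (ContinuousOn.inv₀ (by fun_prop) fun _ hz => sub_ne_zero.2 hz.2)
    (ContinuousOn.inv₀ (by fun_prop) fun _ hz => add_conj_ne_zero ha hz.1)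

lemma reflectedCauchyKernel_mul_I (ha : 0 < a.re) (y : ℝ) :
    reflectedCauchyKernel a (y * I) =
      -(2 * Real.pi) * cauchyPDFReal a.im a.re.toNNReal y := by
  have hsub : (y * I - a : ℂ) ≠ 0 := sub_ne_zero.2 (by rintro rfl; simp at ha)
  have hadd : (y * I + conj a : ℂ) ≠ 0 := add_conj_ne_zero ha (by simp)
  have hnum : (y * I + conj a : ℂ) - (y * I - a) = 2 * a.re := by
    rw [add_sub_sub_cancel, add_comm, add_conj]
    push_cast
    rfl
  have hden : (y * I - a : ℂ) * (y * I + conj a) = -((y - a.im) ^ 2 + a.re ^ 2 : ℝ) := by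
    apply Complex.ext <;> simp [-ofReal_add, -ofReal_sub, -ofReal_pow] <;> ring
  have hpi : (Real.pi : ℂ) ≠ 0 := ofReal_ne_zero.2 Real.pi_ne_zero
  rw [reflectedCauchyKernel, inv_sub_inv hsub hadd, hnum, hden, cauchyPDFReal_def,
    Real.coe_toNNReal _ ha.le]
  push_cast
  field_simp

lemma tendsto_integral_reflectedCauchyKernel (ha : 0 < a.re) :
    Tendsto (fun T : ℝ => ∫ y in (-T)..T, reflectedCauchyKernel a (y * I)) atTop
      (𝓝 (-(2 * Real.pi))) := by
  have hreal := intervalIntegral_tendsto_integral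
    (integrable_cauchyPDFReal a.im (γ := a.re.toNNReal)) tendsto_neg_atTop_atBot tendsto_id
  rw [integral_cauchyPDFReal_eq_one _ (Real.toNNReal_pos.2 ha).ne'] at hreal
  simp only [reflectedCauchyKernel_mul_I ha, intervalIntegral.integral_const_mul,
    intervalIntegral.integral_ofReal]
  simpa using ((continuous_ofReal.tendsto 1).comp hreal).const_mul (-(2 * Real.pi) : ℂ)

lemma tendsto_mul_reflectedCauchyKernel_cobounded (a : ℂ) :
    Tendsto (fun z => z * reflectedCauchyKernel a z) (cobounded ℂ) (𝓝 0) := by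
  have hsub : Tendsto (fun z => (z - a)⁻¹) (cobounded ℂ) (𝓝 0) :=
    tendsto_inv₀_cobounded.comp (tendsto_sub_const_cobounded a)
  have hadd : Tendsto (fun z => (z + conj a)⁻¹) (cobounded ℂ) (𝓝 0) :=
    tendsto_inv₀_cobounded.comp (tendsto_add_const_cobounded (conj a))
  have hlim : Tendsto (fun z => a * (z - a)⁻¹ + conj a * (z + conj a)⁻¹) (cobounded ℂ) (𝓝 0) := by
    simpa using (hsub.const_mul a).add (hadd.const_mul (conj a))
  refine hlim.congr' ?_
  filter_upwards [eventually_ne_cobounded a, eventually_ne_cobounded (-conj a)] with z hz hz'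
  have h1 : z - a ≠ 0 := sub_ne_zero.2 hz
  have h2 : z + conj a ≠ 0 := fun h => hz' (eq_neg_of_add_eq_zero_left h)
  rw [reflectedCauchyKernel]
  field_simp
  ring

lemma tendsto_boxArcIntegral_reflectedCauchyKernel (a : ℂ) :
    Tendsto (boxArcIntegral (reflectedCauchyKernel a)) atTop (𝓝 0) :=
  tendsto_boxArcIntegral_of_tendsto_smul
    ((tendsto_mul_reflectedCauchyKernel_cobounded a).mono_left inf_le_left)

lemma inv_sub_smul_eq_add_reflectedCauchyKernel_smul (f : ℂ → E) {z : ℂ} (hz : z ≠ a) :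
    (z - a)⁻¹ • f z =
      (dslope f a z + (z + conj a)⁻¹ • f a) + reflectedCauchyKernel a z • f a := by
  rw [dslope_of_ne _ hz, slope_def_module, reflectedCauchyKernel]
  module

lemma boxArcIntegral_sub_integral_inv_sub_smul [CompleteSpace E]
    (hf : DiffContOnCl ℂ f {z | 0 < z.re}) (ha : 0 < a.re) (hT : ‖a‖ < T) :
    boxArcIntegral (fun z => (z - a)⁻¹ • f z) T -
        I • ∫ y in (-T)..T, (y * I - a : ℂ)⁻¹ • f (y * I) =
      (boxArcIntegral (reflectedCauchyKernel a) T -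
        I * ∫ y in (-T)..T, reflectedCauchyKernel a (y * I)) • f a := by
  set h : ℂ → E := fun z => dslope f a z + (z + conj a)⁻¹ • f a
  have hh : DiffContOnCl ℂ h {z | 0 < z.re} :=
    (diffContOnCl_dslope hf (isOpen_re_pos.mem_nhds ha)).add
      ((diffContOnCl_inv_add_conj ha).smul_const (f a))
  have hT0 : 0 ≤ T := (norm_nonneg a).trans hT.le
  have hK : ContinuousOn (fun z => reflectedCauchyKernel a z • f a) {z | 0 ≤ z.re ∧ T ≤ ‖z‖} :=
    ((continuousOn_reflectedCauchyKernel ha).mono fun z hz =>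
      ⟨hz.1, by rintro rfl; exact hT.not_ge hz.2⟩).smul continuousOn_const
  have hKaxis : Continuous fun y : ℝ => reflectedCauchyKernel a (y * I) • f a :=
    ((continuousOn_reflectedCauchyKernel ha).comp_continuous (by fun_prop) fun y =>
      ⟨by simp, by rintro rfl; simp at ha⟩).smul continuous_const
  have harc : boxArcIntegral (fun z => (z - a)⁻¹ • f z) T =
      (I • ∫ y in (-T)..T, h (y * I)) + boxArcIntegral (reflectedCauchyKernel a) T • f a := by
    rw [boxArcIntegral_congr (fun z _ hz => inv_sub_smul_eq_add_reflectedCauchyKernel_smul f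
        (by rintro rfl; exact hT.not_ge hz)) hT0,
      boxArcIntegral_add ((continuousOn_re_nonneg_of_diffContOnCl hh).mono fun z hz => hz.1) hK
        hT0,
      boxArcIntegral_eq_of_diffContOnCl hh hT0, boxArcIntegral_smul_const]
  have haxis : ∫ y in (-T)..T, (y * I - a : ℂ)⁻¹ • f (y * I) =
      (∫ y in (-T)..T, h (y * I)) +
        (∫ y in (-T)..T, reflectedCauchyKernel a (y * I)) • f a := by
    rw [← intervalIntegral.integral_smul_const, ← intervalIntegral.integral_add
      ((continuous_mul_I_of_diffContOnCl hh).intervalIntegrable _ _)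
      (hKaxis.intervalIntegrable _ _)]
    exact intervalIntegral.integral_congr fun y _ =>
      inv_sub_smul_eq_add_reflectedCauchyKernel_smul f (by rintro rfl; simp at ha)
  rw [harc, haxis]
  module

theorem tendsto_boxArcIntegral_sub_integral_inv_sub_smul [CompleteSpace E]
    (hf : DiffContOnCl ℂ f {z | 0 < z.re}) (ha : 0 < a.re) :
    Tendsto (fun T : ℝ => boxArcIntegral (fun z => (z - a)⁻¹ • f z) T -
        I • ∫ y in (-T)..T, (y * I - a : ℂ)⁻¹ • f (y * I)) atTop
      (𝓝 ((2 * Real.pi * I) • f a)) := by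
  have hkernel := ((tendsto_boxArcIntegral_reflectedCauchyKernel a).sub
    ((tendsto_integral_reflectedCauchyKernel ha).const_mul I)).smul_const (f a)
  rw [show 0 - I * -(2 * Real.pi) = 2 * Real.pi * I by ring] at hkernel
  refine hkernel.congr' ?_
  filter_upwards [eventually_gt_atTop ‖a‖] with T hT
  exact (boxArcIntegral_sub_integral_inv_sub_smul hf ha hT).symm

theorem tendsto_integral_exp_smul_inv_sub_smul [CompleteSpace E] {lam : ℝ} (hlam : lam < 0)
    (hg : DiffContOnCl ℂ g {z | 0 < z.re}) (ha : 0 < a.re)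
    (hlim : Tendsto (fun z => (z - a)⁻¹ • g z) (cobounded ℂ ⊓ 𝓟 {z | 0 ≤ z.re}) (𝓝 0)) :
    Tendsto (fun T : ℝ => ∫ y in (-T)..T, exp (lam * (y * I)) • (y * I - a : ℂ)⁻¹ • g (y * I))
      atTop (𝓝 (-(2 * Real.pi * exp (lam * a)) • g a)) := by
  have hexp : DiffContOnCl ℂ (fun z : ℂ => exp (lam * z)) {z | 0 < z.re} :=
    Differentiable.diffContOnCl (by fun_prop)
  have hres := tendsto_boxArcIntegral_sub_integral_inv_sub_smul (hexp.smul hg) ha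
  have harc := tendsto_boxArcIntegral_exp_smul hlam hlim
  simp only [smul_comm _ (exp _)] at hres
  convert (harc.sub hres).const_smul (-I) using 2
  · simp [smul_smul]
  · simp only [zero_sub, smul_smul, ← neg_smul]
    congr 1
    linear_combination (-2 * Real.pi * exp (lam * a)) * I_sq

end RightHalfPlane

section Log

open Bornology Topology

lemma tendsto_log_cobounded : Tendsto log (cobounded ℂ) (cobounded ℂ) := by
  rw [← tendsto_norm_atTop_iff_cobounded]
  refine tendsto_atTop_mono (fun z => ?_)
    (Real.tendsto_log_atTop.comp tendsto_norm_cobounded_atTop)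
  simpa only [Function.comp, log_re] using re_le_norm (log z)

lemma tendsto_log_nhdsNE_zero : Tendsto log (𝓝[≠] 0) (cobounded ℂ) := by
  rw [← tendsto_norm_atTop_iff_cobounded]
  refine tendsto_atTop_mono (fun z => ?_)
    (tendsto_abs_atBot_atTop.comp (Real.tendsto_log_nhdsGT_zero.comp tendsto_norm_nhdsNE_zero))
  simpa only [Function.comp, log_re] using abs_re_le_norm (log z)

-- The value at `0` is the limit only by the conventions `log 0 = 0` and `0⁻¹ = 0`.
lemma continuousAt_inv_log_zero : ContinuousAt (fun z => (log z)⁻¹) 0 := by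
  rw [continuousAt_iff_punctured_nhds, log_zero, inv_zero]
  exact tendsto_inv₀_cobounded.comp tendsto_log_nhdsNE_zero

lemma sub_one_mul_dslope_log_one (z : ℂ) : (z - 1) * dslope log 1 z = log z := by
  simpa using sub_smul_dslope log 1 z

lemma dslope_log_one_self : dslope log 1 1 = 1 := by
  rw [dslope_same, (hasDerivAt_log one_mem_slitPlane).deriv, inv_one]

lemma dslope_log_one_ne_zero {z : ℂ} (hz : z ≠ 0) : dslope log 1 z ≠ 0 := by
  intro h
  have hlog : log z = 0 := by rw [← sub_one_mul_dslope_log_one, h, mul_zero]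
  have hone : z = 1 := by rw [← exp_log hz, hlog, Complex.exp_zero]
  rw [hone, dslope_log_one_self] at h
  exact one_ne_zero h

lemma differentiableOn_inv_dslope_log_one :
    DifferentiableOn ℂ (fun z => (dslope log 1 z)⁻¹) slitPlane :=
  DifferentiableOn.inv
    ((differentiableOn_dslope (isOpen_slitPlane.mem_nhds one_mem_slitPlane)).2
      fun _ hz => (differentiableAt_log hz).differentiableWithinAt)
    fun _ hz => dslope_log_one_ne_zero (slitPlane_ne_zero hz)

lemma continuousAt_inv_dslope_log_one_zero :
    ContinuousAt (fun z => (dslope log 1 z)⁻¹) 0 := by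
  have h : ContinuousAt (fun z : ℂ => (z - 1) * (log z)⁻¹) 0 :=
    ContinuousAt.mul (by fun_prop) continuousAt_inv_log_zero
  refine h.congr ?_
  filter_upwards [isOpen_ne.mem_nhds (zero_ne_one (α := ℂ))] with z hz
  rw [← sub_one_mul_dslope_log_one, mul_inv, mul_inv_cancel_left₀ (sub_ne_zero.2 hz)]

lemma diffContOnCl_inv_dslope_log_one :
    DiffContOnCl ℂ (fun z => (dslope log 1 z)⁻¹) {z | 0 < z.re} := by
  refine ⟨differentiableOn_inv_dslope_log_one.mono fun z hz => .inl hz, ?_⟩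
  rw [closure_setOfPred_lt_re]
  intro z hz
  refine ContinuousAt.continuousWithinAt ?_
  rcases eq_or_ne z 0 with rfl | h0
  · exact continuousAt_inv_dslope_log_one_zero
  · have hslit : z ∈ slitPlane := by
      rw [mem_slitPlane_iff]
      by_contra! hc
      exact h0 (Complex.ext (le_antisymm hc.1 hz) hc.2)
    exact (differentiableOn_inv_dslope_log_one.differentiableAt
      (isOpen_slitPlane.mem_nhds hslit)).continuousAt

theorem tendsto_integral_exp_div_log {lam : ℝ} (hlam : lam < 0) :
    Tendsto (fun T : ℝ => ∫ y in (-T)..T, exp (lam * (y * I)) / log (y * I)) atTop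
      (𝓝 (-(2 * Real.pi * exp lam))) := by
  have hinv : ∀ z : ℂ, (z - 1)⁻¹ * (dslope log 1 z)⁻¹ = (log z)⁻¹ := fun z => by
    rw [← mul_inv, sub_one_mul_dslope_log_one]
  have hlim : Tendsto (fun z : ℂ => (z - 1)⁻¹ • (dslope log 1 z)⁻¹)
      (cobounded ℂ ⊓ 𝓟 {z | 0 ≤ z.re}) (𝓝 0) := by
    simp only [smul_eq_mul, hinv]
    exact (tendsto_inv₀_cobounded.comp tendsto_log_cobounded).mono_left inf_le_left
  simpa only [smul_eq_mul, hinv, dslope_log_one_self, inv_one, mul_one, div_eq_mul_inv] using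
    tendsto_integral_exp_smul_inv_sub_smul hlam diffContOnCl_inv_dslope_log_one
      (by simp : 0 < (1 : ℂ).re) hlim

end Log

lemma integral_comp_neg_I_mul {E : Type*} [NormedAddCommGroup E] [NormedSpace ℝ E] (f : ℂ → E)
    (T : ℝ) : ∫ u in (-T)..T, f (-I * u) = ∫ y in (-T)..T, f (y * I) := by
  have hneg := intervalIntegral.integral_comp_neg (a := -T) (b := T) fun y : ℝ => f (y * I)
  rw [neg_neg] at hneg
  rw [← hneg]
  refine intervalIntegral.integral_congr fun u _ => congrArg f ?_
  push_cast
  ring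

theorem stmt11 (lam : ℝ) (hlam : lam < 0) :
    Tendsto
      (fun T : ℝ => (1 / (2 * Real.pi) : ℂ) *
        ∫ u in (-T : ℝ)..T,
          Complex.exp (-Complex.I * lam * u) / Complex.log (-Complex.I * u))
      atTop (nhds (-Complex.exp lam)) := by
  have hsubst : ∀ T : ℝ, ∫ u in (-T)..T, exp (-I * lam * u) / log (-I * u) =
      ∫ y in (-T)..T, exp (lam * (y * I)) / log (y * I) := fun T => by
    simpa only [mul_left_comm (lam : ℂ), mul_assoc] using
      integral_comp_neg_I_mul (fun z => exp (lam * z) / log z) T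
  have hvalue : -exp lam = (1 / (2 * Real.pi)) * -(2 * Real.pi * exp lam) := by
    have hpi : (Real.pi : ℂ) ≠ 0 := ofReal_ne_zero.2 Real.pi_ne_zero
    field_simp
  simp only [hsubst]
  rw [hvalue]
  exact (tendsto_integral_exp_div_log hlam).const_mul _
end

section
/- For every λ > 0, (1/(2π)) ∫_{-∞}^∞ e^{-iλu} / log(-iu) du = W(λ) := ∫_0^∞ e^{-λu} / ((log u)² + π²) du, where log is the principal branch and the left-hand integral is an improper Riemann integral. -/
open Filter Complex

noncomputable def W (lam : ℝ) : ℝ :=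
  ∫ u in Set.Ioi (0 : ℝ), Real.exp (-lam * u) / ((Real.log u) ^ 2 + Real.pi ^ 2)

/-!
The integrand takes conjugate values at `u` and `-u`, so the integral over `[-T, T]` is twice the
real part of the integral over `[0, T]`. For `u > 0` put `z = u * I`; then
`log (-I * u) = log (-z) = log z - π * I`, and the integral over `[0, T]` runs along the side on the
imaginary axis of the square with opposite corners `0` and `T + T * I`, the function being
`exp (-lam * z) / (log z - π * I)`. By Cauchy's theorem it can be moved to the side on the real
axis, since the two outer sides contribute at most `2 * C / lam`, where `C` bounds
`1 / |log z - π * I|` outside the disc of radius `T`. On the real axis the real part of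
`-I / (log x - π * I)` is `π / ((log x) ^ 2 + π ^ 2)`.
-/

open Set Topology Interval MeasureTheory
open scoped ComplexConjugate

theorem eventually_norm_le_of_tendsto_zero_cobounded {V E : Type*} [SeminormedAddGroup V]
    [SeminormedAddGroup E] {f : V → E} {s : Set V} {C : ℝ}
    (h0 : Tendsto f (Bornology.cobounded V ⊓ 𝓟 s) (𝓝 0)) (hC : 0 < C) :
    ∀ᶠ R : ℝ in atTop, ∀ z ∈ s, R ≤ ‖z‖ → ‖f z‖ ≤ C := by
  have h : ∀ᶠ z in Bornology.cobounded V, z ∈ s → ‖f z‖ ≤ C :=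
    eventually_inf_principal.1 <| h0.norm.eventually_le_const (by simpa using hC)
  obtain ⟨R₀, -, hR₀⟩ := hasBasis_cobounded_norm.eventually_iff.1 h
  filter_upwards [eventually_ge_atTop R₀] with R hR z hz hRz
  exact hR₀ (hR.trans hRz) hz

section QuarterTurn

variable {E : Type*} [NormedAddCommGroup E] [NormedSpace ℂ E] {f : ℂ → E} {lam C T : ℝ}

theorem norm_exp_neg_ofReal_mul (lam : ℝ) (z : ℂ) :
    ‖exp (-lam * z)‖ = Real.exp (-lam * z.re) := by
  rw [norm_exp, ← ofReal_neg, re_ofReal_mul]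

theorem integral_exp_neg_mul_le_one_div (hlam : 0 < lam) (T : ℝ) :
    ∫ x in (0 : ℝ)..T, Real.exp (-lam * x) ≤ 1 / lam := by
  have h := intervalIntegral.integral_comp_mul_left (a := 0) (b := T) Real.exp
    (neg_ne_zero.2 hlam.ne')
  rw [h, integral_exp, mul_zero, Real.exp_zero, smul_eq_mul, inv_neg, neg_mul, ← mul_neg, neg_sub,
    one_div]
  exact mul_le_of_le_one_right (by positivity) (by linarith [Real.exp_pos (-lam * T)])

theorem norm_integral_exp_smul_horizontal_le (hlam : 0 < lam) (hT : 0 ≤ T) (y : ℝ)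
    (hf : ∀ x : ℝ, 0 ≤ x → ‖f (x + y * I)‖ ≤ C) :
    ‖∫ x in (0 : ℝ)..T, exp (-lam * (x + y * I)) • f (x + y * I)‖ ≤ C / lam := by
  have hC : 0 ≤ C := (norm_nonneg _).trans (hf 0 le_rfl)
  have hbound : ∀ x ∈ Ioc 0 T,
      ‖exp (-lam * (x + y * I)) • f (x + y * I)‖ ≤ Real.exp (-lam * x) * C := fun x hx => by
    rw [norm_smul, norm_exp_neg_ofReal_mul, show (x + y * I : ℂ).re = x by simp]
    gcongr
    exact hf x hx.1.le
  calc ‖∫ x in (0 : ℝ)..T, exp (-lam * (x + y * I)) • f (x + y * I)‖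
      ≤ ∫ x in (0 : ℝ)..T, Real.exp (-lam * x) * C :=
        intervalIntegral.norm_integral_le_of_norm_le hT (Eventually.of_forall hbound)
          (Continuous.intervalIntegrable (by fun_prop) _ _)
    _ = (∫ x in (0 : ℝ)..T, Real.exp (-lam * x)) * C := intervalIntegral.integral_mul_const _ _
    _ ≤ 1 / lam * C := by gcongr; exact integral_exp_neg_mul_le_one_div hlam T
    _ = C / lam := one_div_mul_eq_div _ _

theorem norm_integral_exp_smul_vertical_le (hlam : 0 < lam) (hT : 0 ≤ T)
    (hf : ∀ y : ℝ, 0 ≤ y → ‖f (T + y * I)‖ ≤ C) :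
    ‖∫ y in (0 : ℝ)..T, exp (-lam * (T + y * I)) • f (T + y * I)‖ ≤ C / lam := by
  have hC : 0 ≤ C := (norm_nonneg _).trans (hf 0 le_rfl)
  have hbound : ∀ y ∈ Ι 0 T,
      ‖exp (-lam * (T + y * I)) • f (T + y * I)‖ ≤ Real.exp (-lam * T) * C := fun y hy => by
    rw [norm_smul, norm_exp_neg_ofReal_mul, show (T + y * I : ℂ).re = T by simp]
    rw [uIoc_of_le hT] at hy
    gcongr
    exact hf y hy.1.le
  have hexp : Real.exp (-lam * T) * (lam * T) ≤ 1 := by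
    rw [neg_mul, Real.exp_neg, inv_mul_le_one₀ (Real.exp_pos _)]
    linarith [Real.add_one_le_exp (lam * T)]
  calc ‖∫ y in (0 : ℝ)..T, exp (-lam * (T + y * I)) • f (T + y * I)‖
      ≤ Real.exp (-lam * T) * C * |T - 0| :=
        intervalIntegral.norm_integral_le_of_norm_le_const hbound
    _ = Real.exp (-lam * T) * (lam * T) * (C / lam) := by
        rw [sub_zero, abs_of_nonneg hT]
        field_simp
    _ ≤ C / lam := mul_le_of_le_one_left (by positivity) hexp

theorem integral_boundary_square_eq_zero
    (hc : ContinuousOn f (Ici 0 ×ℂ Ici 0)) (hd : DifferentiableOn ℂ f (Ioi 0 ×ℂ Ioi 0))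
    (hT : 0 ≤ T) :
    (∫ x in (0 : ℝ)..T, f x) - (∫ x in (0 : ℝ)..T, f (x + T * I)) +
      I • (∫ y in (0 : ℝ)..T, f (T + y * I)) - I • (∫ y in (0 : ℝ)..T, f (y * I)) = 0 := by
  have hclosed : [[0, T]] ×ℂ [[0, T]] ⊆ Ici 0 ×ℂ Ici 0 := by
    rw [uIcc_of_le hT]
    exact inter_subset_inter (preimage_mono Icc_subset_Ici_self) (preimage_mono Icc_subset_Ici_self)
  have hopen : Ioo (min 0 T) (max 0 T) ×ℂ Ioo (min 0 T) (max 0 T) ⊆ Ioi 0 ×ℂ Ioi 0 := by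
    rw [min_eq_left hT]
    exact inter_subset_inter (preimage_mono Ioo_subset_Ioi_self) (preimage_mono Ioo_subset_Ioi_self)
  simpa using integral_boundary_rect_eq_zero_of_continuousOn_of_differentiableOn f 0 (T + T * I)
    (by simpa using hc.mono hclosed) (by simpa using hd.mono hopen)

theorem norm_integral_exp_smul_quarter_turn_sub_le
    (hc : ContinuousOn f (Ici 0 ×ℂ Ici 0)) (hd : DifferentiableOn ℂ f (Ioi 0 ×ℂ Ioi 0))
    (hlam : 0 < lam) (hT : 0 ≤ T) (hf : ∀ z ∈ Ici 0 ×ℂ Ici 0, T ≤ ‖z‖ → ‖f z‖ ≤ C) :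
    ‖(∫ y in (0 : ℝ)..T, exp (-lam * (y * I)) • f (y * I)) -
      -I • ∫ x in (0 : ℝ)..T, exp (-lam * x) • f x‖ ≤ 2 * C / lam := by
  have hcauchy := integral_boundary_square_eq_zero (f := fun z => exp (-lam * z) • f z)
    (by fun_prop) (by fun_prop) hT
  have htop := norm_integral_exp_smul_horizontal_le hlam hT T fun x hx =>
    hf (x + T * I) (by simp [mem_reProdIm, hx, hT]) <| by
      simpa [abs_of_nonneg hT] using abs_im_le_norm (x + T * I)
  have hright := norm_integral_exp_smul_vertical_le hlam hT fun y hy =>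
    hf (T + y * I) (by simp [mem_reProdIm, hy, hT]) <| by
      simpa [abs_of_nonneg hT] using abs_re_le_norm (T + y * I)
  set top := ∫ x in (0 : ℝ)..T, exp (-lam * (x + T * I)) • f (x + T * I)
  set right := ∫ y in (0 : ℝ)..T, exp (-lam * (T + y * I)) • f (T + y * I)
  set bottom := ∫ x in (0 : ℝ)..T, exp (-lam * x) • f x
  set left := ∫ y in (0 : ℝ)..T, exp (-lam * (y * I)) • f (y * I)
  have hsides : left - -I • bottom = right + I • top := by
    have h := congrArg (I • ·) hcauchy
    simp only [smul_sub, smul_add, smul_smul, I_mul_I, neg_smul, one_smul, smul_zero] at h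
    linear_combination (norm := module) h
  calc ‖left - -I • bottom‖ = ‖right + I • top‖ := by rw [hsides]
    _ ≤ ‖right‖ + ‖top‖ := by simpa [norm_smul] using norm_add_le right (I • top)
    _ ≤ C / lam + C / lam := add_le_add hright htop
    _ = 2 * C / lam := by ring

theorem integrableOn_exp_smul_of_tendsto_zero (hc : ContinuousOn f (Ici 0 ×ℂ Ici 0))
    (h0 : Tendsto f (Bornology.cobounded ℂ ⊓ 𝓟 (Ici 0 ×ℂ Ici 0)) (𝓝 0)) (hlam : 0 < lam) :
    IntegrableOn (fun x : ℝ => exp (-lam * x) • f x) (Ioi 0) := by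
  have hcont : ContinuousOn (fun x : ℝ => exp (-lam * x) • f x) (Ici 0) :=
    ContinuousOn.smul (by fun_prop) <|
      hc.comp continuous_ofReal.continuousOn fun x hx => by simpa [mem_reProdIm] using hx
  have hO : (fun x : ℝ => exp (-lam * x) • f x) =O[atTop] fun x : ℝ => Real.exp (-lam * x) := by
    refine Asymptotics.IsBigO.of_bound 1 ?_
    filter_upwards [eventually_norm_le_of_tendsto_zero_cobounded h0 one_pos,
      eventually_ge_atTop 0] with x hx hx0
    have hfx : ‖f x‖ ≤ 1 := hx x (by simpa [mem_reProdIm] using hx0) (by simp [le_abs_self])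
    rw [norm_smul, norm_exp_neg_ofReal_mul, ofReal_re, Real.norm_eq_abs, Real.abs_exp, one_mul]
    exact mul_le_of_le_one_right (Real.exp_pos _).le hfx
  exact (integrableOn_Ici_iff_integrableOn_Ioi (by finiteness)).1 <|
    (hcont.locallyIntegrableOn measurableSet_Ici).integrableOn_of_isBigO_atTop hO
      ⟨Ioi 0, Ioi_mem_atTop 0, exp_neg_integrableOn_Ioi 0 hlam⟩

theorem tendsto_integral_exp_smul_quarter_turn
    (hc : ContinuousOn f (Ici 0 ×ℂ Ici 0)) (hd : DifferentiableOn ℂ f (Ioi 0 ×ℂ Ioi 0))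
    (h0 : Tendsto f (Bornology.cobounded ℂ ⊓ 𝓟 (Ici 0 ×ℂ Ici 0)) (𝓝 0)) (hlam : 0 < lam) :
    Tendsto (fun T : ℝ => ∫ y in (0 : ℝ)..T, exp (-lam * (y * I)) • f (y * I)) atTop
      (𝓝 (-I • ∫ x : ℝ in Ioi 0, exp (-lam * x) • f x)) := by
  have hreal : Tendsto (fun T : ℝ => -I • ∫ x in (0 : ℝ)..T, exp (-lam * x) • f x) atTop
      (𝓝 (-I • ∫ x : ℝ in Ioi 0, exp (-lam * x) • f x)) :=
    (intervalIntegral_tendsto_integral_Ioi 0 (integrableOn_exp_smul_of_tendsto_zero hc h0 hlam)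
      tendsto_id).const_smul _
  have hdiff : Tendsto (fun T : ℝ => (∫ y in (0 : ℝ)..T, exp (-lam * (y * I)) • f (y * I)) -
      -I • ∫ x in (0 : ℝ)..T, exp (-lam * x) • f x) atTop (𝓝 0) := by
    refine NormedAddGroup.tendsto_nhds_zero.2 fun ε hε => ?_
    filter_upwards [eventually_ge_atTop 0, eventually_norm_le_of_tendsto_zero_cobounded h0
      (show 0 < ε * lam / 4 by positivity)] with T hT hf
    calc _ ≤ 2 * (ε * lam / 4) / lam :=
          norm_integral_exp_smul_quarter_turn_sub_le hc hd hlam hT hf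
      _ = ε / 2 := by field_simp; norm_num
      _ < ε := half_lt_self hε
  simpa using hdiff.add hreal

end QuarterTurn

theorem integral_neg_self_eq_two_mul_re {g : ℝ → ℂ} (hg : ∀ u, g (-u) = conj (g u)) {T : ℝ}
    (hint : IntervalIntegrable g volume 0 T) :
    ∫ u in (-T)..T, g u = (2 * (∫ u in (0 : ℝ)..T, g u).re : ℝ) := by
  have hneg : ∫ u in (-T)..0, g u = conj (∫ u in (0 : ℝ)..T, g u) := by
    rw [← intervalIntegral.intervalIntegral_conj]
    simpa [hg] using (intervalIntegral.integral_comp_neg g (a := 0) (b := T)).symm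
  have hint_neg : IntervalIntegrable g volume (-T) 0 := by
    have hconj : IntervalIntegrable (fun u => g (-u)) volume 0 T := by
      simp only [hg]
      exact ⟨conjCLE.toContinuousLinearMap.integrable_comp hint.1,
        conjCLE.toContinuousLinearMap.integrable_comp hint.2⟩
    simpa using ((IntervalIntegrable.iff_comp_neg (by finiteness)).1 hconj).symm
  rw [← intervalIntegral.integral_add_adjacent_intervals hint_neg hint, hneg, add_comm, add_conj]

/-- The continuation of `z ↦ 1 / log (-z)` from the upper half-plane to the slit plane, where
`log (-z) = log z - π * I`. The value at `0` is the limit there, `Complex.log 0` being a junk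
value. -/
noncomputable def invLogNeg : ℂ → ℂ :=
  Function.update (fun z => (log z - Real.pi * I)⁻¹) 0 0

theorem invLogNeg_of_ne_zero {z : ℂ} (hz : z ≠ 0) : invLogNeg z = (log z - Real.pi * I)⁻¹ :=
  Function.update_of_ne hz _ _

theorem tendsto_inv_log_sub (c : ℂ) {l : Filter ℂ}
    (hl : Tendsto (fun z : ℂ => |Real.log ‖z‖|) l atTop) :
    Tendsto (fun z => (log z - c)⁻¹) l (𝓝 0) := by
  have hlog : Tendsto log l (Bornology.cobounded ℂ) :=
    tendsto_norm_atTop_iff_cobounded.1 <|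
      tendsto_atTop_mono (fun z => log_re z ▸ abs_re_le_norm (log z)) hl
  exact tendsto_inv₀_cobounded.comp ((tendsto_sub_const_cobounded c).comp hlog)

theorem tendsto_invLogNeg_cobounded : Tendsto invLogNeg (Bornology.cobounded ℂ) (𝓝 0) := by
  refine (tendsto_inv_log_sub (Real.pi * I) ?_).congr' ?_
  · exact tendsto_abs_atTop_atTop.comp (Real.tendsto_log_atTop.comp tendsto_norm_cobounded_atTop)
  · filter_upwards [Bornology.eventually_ne_cobounded (0 : ℂ)] with z hz
    exact (invLogNeg_of_ne_zero hz).symm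

theorem continuousAt_invLogNeg_zero : ContinuousAt invLogNeg 0 :=
  continuousAt_update_same.2 <| tendsto_inv_log_sub _ <|
    tendsto_abs_atBot_atTop.comp (Real.tendsto_log_nhdsGT_zero.comp tendsto_norm_nhdsNE_zero)

theorem differentiableAt_invLogNeg {z : ℂ} (hz : z ∈ slitPlane) :
    DifferentiableAt ℂ invLogNeg z := by
  have hden : log z - Real.pi * I ≠ 0 := fun h => by
    have him : arg z - Real.pi = 0 := by simpa [log_im] using congrArg im h
    exact (mem_slitPlane_iff_arg.1 hz).1 (sub_eq_zero.1 him)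
  refine (((differentiableAt_log hz).sub_const _).inv hden).congr_of_eventuallyEq ?_
  filter_upwards [isOpen_ne.mem_nhds (slitPlane_ne_zero hz)] with w hw
  exact invLogNeg_of_ne_zero hw

theorem continuousOn_invLogNeg : ContinuousOn invLogNeg (Ici 0 ×ℂ Ici 0) := by
  intro z hz
  obtain rfl | hz0 := eq_or_ne z 0
  · exact continuousAt_invLogNeg_zero.continuousWithinAt
  · have hslit : z ∈ slitPlane := by
      refine mem_slitPlane_iff.2 (hz.1.lt_or_eq.imp id fun hre him => hz0 ?_)
      exact Complex.ext hre.symm him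
    exact (differentiableAt_invLogNeg hslit).continuousAt.continuousWithinAt

theorem differentiableOn_invLogNeg : DifferentiableOn ℂ invLogNeg (Ioi 0 ×ℂ Ioi 0) :=
  fun _ hz => (differentiableAt_invLogNeg (Or.inl hz.1)).differentiableWithinAt

theorem invLogNeg_ofReal_mul_I {u : ℝ} (hu : 0 < u) : invLogNeg (u * I) = (log (-I * u))⁻¹ := by
  have hu0 : (u : ℂ) ≠ 0 := ofReal_ne_zero.2 hu.ne'
  rw [invLogNeg_of_ne_zero (mul_ne_zero hu0 I_ne_zero), log_ofReal_mul hu I_ne_zero,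
    log_mul_ofReal u hu _ (neg_ne_zero.2 I_ne_zero), log_I, log_neg_I]
  ring_nf

theorem re_neg_I_mul_exp_mul_invLogNeg (lam : ℝ) {x : ℝ} (hx : 0 < x) :
    (-I * (exp (-lam * x) * invLogNeg x)).re =
      Real.pi * (Real.exp (-lam * x) / (Real.log x ^ 2 + Real.pi ^ 2)) := by
  rw [invLogNeg_of_ne_zero (ofReal_ne_zero.2 hx.ne'), ← ofReal_log hx.le, ← ofReal_neg,
    ← ofReal_mul, ← ofReal_exp, mul_left_comm, re_ofReal_mul, div_eq_mul_inv, mul_left_comm]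
  congr 1
  simp [normSq_apply, div_eq_mul_inv, sq]

theorem re_neg_I_mul_integral_exp_mul_invLogNeg {lam : ℝ} (hlam : 0 < lam) :
    (-I * ∫ x : ℝ in Ioi 0, exp (-lam * x) * invLogNeg x).re = Real.pi * W lam := by
  have hint := integrableOn_exp_smul_of_tendsto_zero continuousOn_invLogNeg
    (tendsto_invLogNeg_cobounded.mono_left inf_le_left) hlam
  rw [W, ← integral_const_mul, ← integral_const_mul]
  refine (integral_re (hint.const_mul (-I))).symm.trans ?_
  exact setIntegral_congr_fun measurableSet_Ioi fun x hx => re_neg_I_mul_exp_mul_invLogNeg lam hx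

/-- The integrand of the oscillatory integral representing `W`. -/
noncomputable def expDivLog (lam u : ℝ) : ℂ :=
  exp (-I * lam * u) / log (-I * u)

theorem expDivLog_neg (lam u : ℝ) : expDivLog lam (-u) = conj (expDivLog lam u) := by
  have harg : arg (-I * u) ≠ Real.pi := fun h => by
    simpa using (arg_eq_pi_iff.1 h).1
  rw [expDivLog, expDivLog, map_div₀, ← exp_conj, ← log_conj _ harg]
  simp

theorem eqOn_exp_mul_invLogNeg_expDivLog (lam : ℝ) :
    EqOn (fun u : ℝ => exp (-lam * (u * I)) * invLogNeg (u * I)) (expDivLog lam) (Ioi 0) := by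
  intro u hu
  simp only [expDivLog, invLogNeg_ofReal_mul_I hu, div_eq_mul_inv]
  ring_nf

theorem intervalIntegrable_expDivLog (lam : ℝ) {T : ℝ} (hT : 0 ≤ T) :
    IntervalIntegrable (expDivLog lam) volume 0 T := by
  have hcont : ContinuousOn (fun u : ℝ => exp (-lam * (u * I)) * invLogNeg (u * I)) [[0, T]] := by
    refine ContinuousOn.mul (by fun_prop) (continuousOn_invLogNeg.comp (by fun_prop) fun u hu => ?_)
    rw [uIcc_of_le hT] at hu
    simpa [mem_reProdIm] using hu.1
  refine hcont.intervalIntegrable.congr ((eqOn_exp_mul_invLogNeg_expDivLog lam).mono ?_)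
  rw [uIoc_of_le hT]
  exact Ioc_subset_Ioi_self

theorem tendsto_integral_expDivLog {lam : ℝ} (hlam : 0 < lam) :
    Tendsto (fun T : ℝ => ∫ u in (0 : ℝ)..T, expDivLog lam u) atTop
      (𝓝 (-I * ∫ x : ℝ in Ioi 0, exp (-lam * x) * invLogNeg x)) := by
  refine (tendsto_integral_exp_smul_quarter_turn continuousOn_invLogNeg differentiableOn_invLogNeg
    (tendsto_invLogNeg_cobounded.mono_left inf_le_left) hlam).congr' ?_
  filter_upwards [eventually_ge_atTop 0] with T hT
  exact intervalIntegral.integral_congr_Ioo_of_le hT <|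
    (eqOn_exp_mul_invLogNeg_expDivLog lam).mono Ioo_subset_Ioi_self

theorem stmt12 (lam : ℝ) (hlam : 0 < lam) :
    Tendsto
      (fun T : ℝ => (1 / (2 * Real.pi) : ℂ) *
        ∫ u in (-T : ℝ)..T,
          Complex.exp (-Complex.I * lam * u) / Complex.log (-Complex.I * u))
      atTop (nhds ((W lam : ℂ))) := by
  have hre : Tendsto (fun T : ℝ => (∫ u in (0 : ℝ)..T, expDivLog lam u).re) atTop
      (𝓝 (Real.pi * W lam)) := by
    rw [← re_neg_I_mul_integral_exp_mul_invLogNeg hlam]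
    exact (continuous_re.tendsto _).comp (tendsto_integral_expDivLog hlam)
  have hW : (W lam : ℂ) = 1 / (2 * Real.pi) * (2 * (Real.pi * W lam) : ℝ) := by
    have hpi : (Real.pi : ℂ) ≠ 0 := ofReal_ne_zero.2 Real.pi_ne_zero
    push_cast
    field_simp
  rw [hW]
  refine Tendsto.const_mul _ (((continuous_ofReal.tendsto _).comp (hre.const_mul 2)).congr' ?_)
  filter_upwards [eventually_ge_atTop 0] with T hT
  exact (integral_neg_self_eq_two_mul_re (expDivLog_neg lam)
    (intervalIntegrable_expDivLog lam hT)).symm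
end

section
/- For every λ > 0, W(λ) = ∫_0^∞ sin(λt) / ((log t)² + π²/4) dt − e^{-λ}, where W(λ) = ∫_0^∞ e^{-λu}/((log u)² + π²) du and the first integral on the right is a conditionally convergent improper integral. -/
open Filter

/-!
With `ρ = δ₁ + du / (log u ^ 2 + π ^ 2)` on `(0, ∞)`, the imaginary part of the partial
fraction expansion `1 / log z = 1 / (z - 1) + ∫ u, 1 / (z + u) / (log u ^ 2 + π ^ 2)` at `z = i t`
writes `(π / 2) / (log t ^ 2 + π ^ 2 / 4)` as the `ρ`-average of the kernels `t / (t ^ 2 + u ^ 2)`.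
The sine transform of such a kernel is `(π / 2) * exp (-λ u)`, with partial integrals bounded by a
multiple of `1 / u`, which is `ρ`-integrable; so the sine transform of the average is `π / 2` times
the Laplace transform of `ρ`.

The average is evaluated without contour integration. In logarithmic coordinates it is the
convolution of `1 / (1 + y ^ 2)` with `1 / cosh (π y)`; the latter is its own Fourier transform, by
the reflection formula for `Γ`, and
`exp (-2 π |w|) / cosh (π w) = 2 * exp (-π |w|) - 1 / cosh (π w)` is again a combination of
functions with known transforms.
-/

open MeasureTheory Set Topology Real
open scoped FourierTransform

section CosineTransform

theorem integrable_comp_abs {f : ℝ → ℝ} (hf : IntegrableOn f (Ioi 0)) :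
    Integrable fun x ↦ f |x| := by
  have hpos : IntegrableOn (fun x ↦ f |x|) (Ioi 0) :=
    hf.congr_fun (fun x hx ↦ by rw [abs_of_pos hx]) measurableSet_Ioi
  have hneg : IntegrableOn (fun x ↦ f |x|) (Iic 0) := by
    rw [← neg_zero] at hpos
    rw [integrableOn_Iic_iff_integrableOn_Iio]
    simpa only [abs_neg] using hpos.comp_neg_Iio
  simpa only [Iic_union_Ioi, integrableOn_univ] using hneg.union hpos

theorem fourier_comp_abs {f : ℝ → ℝ} (hf : IntegrableOn f (Ioi 0)) (y : ℝ) :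
    𝓕 (fun x : ℝ ↦ (f |x| : ℂ)) y =
      ((2 * ∫ x in Ioi 0, f x * cos (2 * π * y * x) : ℝ) : ℂ) := by
  have hint : Integrable fun x : ℝ ↦ 𝐞 (-inner ℝ x y) • (f |x| : ℂ) :=
    (Real.fourierIntegral_convergent_iff y).2 (integrable_comp_abs hf).ofReal
  have heuler (x : ℝ) : 𝐞 (-inner ℝ x y) • (f |x| : ℂ) =
      ((f |x| * cos (2 * π * y * x) : ℝ) : ℂ) +
        (-(f |x| * sin (2 * π * y * x)) : ℝ) * Complex.I := by
    have harg : ((2 * π * -inner ℝ x y : ℝ) : ℂ) = -((2 * π * y * x : ℝ) : ℂ) := by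
      simp [mul_assoc]
    rw [Circle.smul_def, Real.fourierChar_apply, harg, Complex.exp_mul_I, Complex.cos_neg,
      Complex.sin_neg, smul_eq_mul]
    push_cast
    ring
  have hcos (x : ℝ) : cos (2 * π * y * |x|) = cos (2 * π * y * x) := by
    rcases abs_choice x with h | h <;> simp [h]
  have hodd : ∫ x, f |x| * sin (2 * π * y * x) = 0 := by
    have h := integral_neg_eq_self (fun x ↦ f |x| * sin (2 * π * y * x)) volume
    simp only [abs_neg, mul_neg, sin_neg, integral_neg] at h
    linarith
  rw [Real.fourier_eq]
  apply Complex.ext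
  · rw [← RCLike.re_eq_complex_re, ← integral_re hint]
    simp only [RCLike.re_eq_complex_re, heuler, Complex.add_re, Complex.re_ofReal_mul,
      Complex.ofReal_re, Complex.I_re, mul_zero, add_zero]
    rw [← integral_comp_abs (f := fun x ↦ f x * cos (2 * π * y * x))]
    simp only [hcos]
  · rw [← RCLike.im_eq_complex_im, ← integral_im hint]
    simp only [RCLike.im_eq_complex_im, heuler, Complex.add_im, Complex.im_ofReal_mul,
      Complex.ofReal_im, Complex.I_im, mul_one, zero_add, integral_neg, hodd, neg_zero]

theorem integral_mul_cos_of_integral_mul_cos_eq {f g : ℝ → ℝ} (hf : Continuous f)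
    (hfi : IntegrableOn f (Ioi 0)) (hgi : IntegrableOn g (Ioi 0))
    (hfg : ∀ y, ∫ x in Ioi 0, f x * cos (y * x) = g y) {x : ℝ} (hx : 0 ≤ x) :
    ∫ y in Ioi 0, g y * cos (x * y) = π / 2 * f x := by
  have heven (y : ℝ) : g |y| = g y := by
    rcases abs_choice y with h | h <;> simp [← hfg, h]
  have hfourier : 𝓕 (fun x : ℝ ↦ (f |x| : ℂ)) = fun y : ℝ ↦ ((2 * g (2 * π * |y|) : ℝ) : ℂ) := by
    ext y
    rw [fourier_comp_abs hfi, hfg, ← heven (2 * π * y), abs_mul, abs_of_pos two_pi_pos]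
  have hGi : IntegrableOn (fun y ↦ 2 * g (2 * π * y)) (Ioi 0) :=
    ((integrableOn_Ioi_comp_mul_left_iff g 0 two_pi_pos).2 (by rwa [mul_zero])).const_mul 2
  have hinv : 𝓕⁻ (𝓕 (fun x : ℝ ↦ (f |x| : ℂ))) x = f |x| :=
    congrFun (Continuous.fourierInv_fourier_eq (by fun_prop) (integrable_comp_abs hfi).ofReal
      (by rw [hfourier]; exact (integrable_comp_abs hGi).ofReal)) x
  rw [hfourier, fourierInv_eq_fourier_neg, fourier_comp_abs hGi, Complex.ofReal_inj,
    abs_of_nonneg hx] at hinv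
  have hscale : ∫ y in Ioi 0, g (2 * π * y) * cos (x * (2 * π * y)) =
      (2 * π)⁻¹ * ∫ y in Ioi 0, g y * cos (x * y) := by
    simpa using integral_comp_mul_left_Ioi (fun y ↦ g y * cos (x * y)) 0 two_pi_pos
  have hcos (y : ℝ) : 2 * g (2 * π * y) * cos (2 * π * -x * y) =
      2 * (g (2 * π * y) * cos (x * (2 * π * y))) := by
    rw [mul_assoc, ← cos_neg]
    ring_nf
  simp only [hcos, integral_const_mul, hscale] at hinv
  rw [← hinv]
  field_simp

theorem integral_exp_neg_mul_mul_cos {c : ℝ} (hc : 0 < c) (b : ℝ) :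
    ∫ x in Ioi 0, exp (-c * x) * cos (b * x) = c / (c ^ 2 + b ^ 2) := by
  have hre : (-c + b * Complex.I).re < 0 := by simpa using hc
  have hint := integrableOn_exp_mul_complex_Ioi hre 0
  have h := congrArg Complex.re (integral_exp_mul_complex_Ioi hre 0)
  rw [← RCLike.re_eq_complex_re, ← integral_re hint] at h
  convert h using 1
  · refine setIntegral_congr_fun measurableSet_Ioi fun x _ ↦ ?_
    simp [Complex.exp_re]
  · simp only [Complex.ofReal_zero, mul_zero, Complex.exp_zero, neg_div, one_div,
      RCLike.re_eq_complex_re, Complex.neg_re, Complex.inv_re, ← Complex.ofReal_neg,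
      Complex.normSq_add_mul_I]
    simp [neg_div]

theorem integrableOn_mul_exp_neg_mul {c : ℝ} (hc : 0 < c) :
    IntegrableOn (fun x ↦ x * exp (-c * x)) (Ioi 0) := by
  simpa only [rpow_one] using
    integrableOn_rpow_mul_exp_neg_mul_rpow (s := 1) (p := 1) (by norm_num) one_pos hc

theorem integrableOn_mul_cexp_neg_mul {z : ℂ} (hz : 0 < z.re) :
    IntegrableOn (fun x : ℝ ↦ x * Complex.exp (-z * x)) (Ioi 0) := by
  refine (integrableOn_mul_exp_neg_mul hz).mono' (by fun_prop) ?_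
  filter_upwards [ae_restrict_mem measurableSet_Ioi] with x (hx : 0 < x)
  simp [Complex.norm_exp, abs_of_pos hx]

theorem integral_Ioi_mul_cexp_neg_mul {z : ℂ} (hz : 0 < z.re) :
    ∫ x : ℝ in Ioi 0, x * Complex.exp (-z * x) = 1 / z ^ 2 := by
  have hz0 : z ≠ 0 := fun h ↦ by simp [h] at hz
  have hint := integrableOn_mul_cexp_neg_mul hz
  have hexp : IntegrableOn (fun x : ℝ ↦ Complex.exp (-z * x)) (Ioi 0) :=
    integrableOn_exp_mul_complex_Ioi (by simpa using hz) 0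
  have hderiv (x : ℝ) : HasDerivAt (fun x : ℝ ↦ -(x / z + 1 / z ^ 2) * Complex.exp (-z * x))
      (x * Complex.exp (-z * x)) x := by
    have hid : HasDerivAt (fun x : ℝ ↦ (x : ℂ)) 1 x := Complex.ofRealCLM.hasDerivAt
    refine (((hid.div_const z).add_const (1 / z ^ 2)).fun_neg.mul
      (hid.const_mul (-z)).cexp).congr_deriv ?_
    field_simp
    ring
  have hprim : IntegrableOn (fun x : ℝ ↦ -(x / z + 1 / z ^ 2) * Complex.exp (-z * x)) (Ioi 0) := by
    refine ((hint.const_mul (-z⁻¹)).add (hexp.const_mul (-(z ^ 2)⁻¹))).congr (.of_forall fun x ↦ ?_)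
    simp only [Pi.add_apply]
    ring
  have hlim := tendsto_zero_of_hasDerivAt_of_integrableOn_Ioi (fun x _ ↦ hderiv x) hint hprim
  rw [integral_Ioi_of_hasDerivAt_of_tendsto' (fun x _ ↦ hderiv x) hint hlim]
  simp

theorem integral_mul_exp_neg_mul_mul_cos {c : ℝ} (hc : 0 < c) (b : ℝ) :
    ∫ x in Ioi 0, x * exp (-c * x) * cos (b * x) = (c ^ 2 - b ^ 2) / (c ^ 2 + b ^ 2) ^ 2 := by
  have hre : 0 < (c + b * Complex.I).re := by simpa using hc
  have h := congrArg Complex.re (integral_Ioi_mul_cexp_neg_mul hre)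
  rw [← RCLike.re_eq_complex_re, ← integral_re (integrableOn_mul_cexp_neg_mul hre)] at h
  convert h using 1
  · refine setIntegral_congr_fun measurableSet_Ioi fun x _ ↦ ?_
    simp [Complex.exp_re, mul_assoc]
  · simp only [RCLike.re_eq_complex_re, one_div, Complex.inv_re, map_pow, Complex.normSq_add_mul_I]
    simp [sq]

end CosineTransform

section Sech

theorem betaIntegral_eq_integral_sigmoid (u v : ℂ) :
    Complex.betaIntegral u v = ∫ y : ℝ, (sigmoid y : ℂ) ^ u * (sigmoid (-y) : ℂ) ^ v := by
  have hsub := integral_image_eq_integral_abs_deriv_smul (s := univ) MeasurableSet.univ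
    (fun y _ ↦ (hasDerivAt_sigmoid y).hasDerivWithinAt) sigmoid_injective.injOn
    (fun x : ℝ ↦ (x : ℂ) ^ (u - 1) * (1 - (x : ℂ)) ^ (v - 1))
  rw [image_univ, range_sigmoid, Measure.restrict_univ] at hsub
  rw [Complex.betaIntegral, intervalIntegral.integral_of_le zero_le_one,
    integral_Ioc_eq_integral_Ioo, hsub]
  refine integral_congr_ae (.of_forall fun y ↦ ?_)
  have hneg : 1 - (sigmoid y : ℂ) = (sigmoid (-y) : ℂ) := by
    rw [sigmoid_neg]
    push_cast
    rfl
  have hpos : (sigmoid y : ℂ) ≠ 0 := Complex.ofReal_ne_zero.2 (sigmoid_pos y).ne'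
  have hpos' : (sigmoid (-y) : ℂ) ≠ 0 := Complex.ofReal_ne_zero.2 (sigmoid_pos (-y)).ne'
  beta_reduce
  rw [hneg, ← sigmoid_neg, abs_of_pos (mul_pos (sigmoid_pos y) (sigmoid_pos (-y))),
    Complex.real_smul, Complex.cpow_sub _ _ hpos, Complex.cpow_sub _ _ hpos', Complex.cpow_one,
    Complex.cpow_one]
  push_cast
  field_simp

theorem sigmoid_two_mul (x : ℝ) : sigmoid (2 * x) = exp x / (2 * cosh x) := by
  rw [sigmoid_def, cosh_eq, show -(2 * x) = -x + -x by ring, exp_add, exp_neg]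
  field_simp

theorem sigmoid_cpow_mul_sigmoid_neg_cpow (s : ℂ) (x : ℝ) :
    (sigmoid (2 * x) : ℂ) ^ s * (sigmoid (-(2 * x)) : ℂ) ^ (1 - s) =
      Complex.exp ((2 * s - 1) * x) / cosh x / 2 := by
  have hcosh : 0 < 2 * cosh x := mul_pos two_pos (cosh_pos x)
  have hpow (y : ℝ) (w : ℂ) : ((exp y / (2 * cosh x) : ℝ) : ℂ) ^ w =
      Complex.exp (y * w - log (2 * cosh x) * w) := by
    rw [Complex.cpow_def_of_ne_zero (Complex.ofReal_ne_zero.2 (by positivity)),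
      ← Complex.ofReal_log (by positivity), log_div (exp_ne_zero y) hcosh.ne', log_exp]
    push_cast
    ring_nf
  calc (sigmoid (2 * x) : ℂ) ^ s * (sigmoid (-(2 * x)) : ℂ) ^ (1 - s)
    _ = Complex.exp ((2 * s - 1) * x - log (2 * cosh x)) := by
      rw [← mul_neg, sigmoid_two_mul, sigmoid_two_mul, cosh_neg, hpow, hpow, ← Complex.exp_add]
      push_cast
      ring_nf
    _ = Complex.exp ((2 * s - 1) * x) / cosh x / 2 := by
      rw [Complex.exp_sub, ← Complex.ofReal_exp, exp_log hcosh]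
      push_cast
      rw [div_div, mul_comm (Complex.cosh _)]

theorem betaIntegral_one_sub {s : ℂ} (hs : 0 < s.re) (hs' : s.re < 1) :
    Complex.betaIntegral s (1 - s) = π / Complex.sin (π * s) := by
  have h := Complex.Gamma_mul_Gamma_eq_betaIntegral hs (t := 1 - s) (by simpa using hs')
  rw [add_sub_cancel, Complex.Gamma_one, one_mul, Complex.Gamma_mul_Gamma_one_sub] at h
  exact h.symm

theorem integral_cexp_mul_div_cosh {z : ℂ} (hz : |z.re| < 1) :
    ∫ x : ℝ, Complex.exp (z * x) / cosh x = π / Complex.cos (π * z / 2) := by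
  obtain ⟨hneg, hpos⟩ := abs_lt.1 hz
  have hbeta : Complex.betaIntegral ((1 + z) / 2) (1 - (1 + z) / 2) =
      π / Complex.cos (π * z / 2) := by
    have hre : ((1 + z) / 2).re = (1 + z.re) / 2 := by simp
    rw [betaIntegral_one_sub (by linarith) (by linarith), ← Complex.sin_add_pi_div_two]
    ring_nf
  have hscale := Measure.integral_comp_mul_left
    (fun y : ℝ ↦ (sigmoid y : ℂ) ^ ((1 + z) / 2) * (sigmoid (-y) : ℂ) ^ (1 - (1 + z) / 2)) 2
  have hz' : 2 * ((1 + z) / 2) - 1 = z := by ring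
  simp only [sigmoid_cpow_mul_sigmoid_neg_cpow, hz', ← betaIntegral_eq_integral_sigmoid, hbeta,
    integral_div] at hscale
  simpa [div_eq_inv_mul] using hscale

theorem integrable_exp_neg_mul_abs {c : ℝ} (hc : 0 < c) : Integrable fun x ↦ exp (-c * |x|) :=
  integrable_comp_abs (integrableOn_exp_mul_Ioi (neg_lt_zero.2 hc) 0)

theorem fourier_exp_neg_mul_abs {c : ℝ} (hc : 0 < c) (y : ℝ) :
    𝓕 (fun x : ℝ ↦ (exp (-c * |x|) : ℂ)) y = ((2 * (c / (c ^ 2 + (2 * π * y) ^ 2)) : ℝ) : ℂ) := by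
  rw [← integral_exp_neg_mul_mul_cos hc, ← fourier_comp_abs
    (integrableOn_exp_mul_Ioi (neg_lt_zero.2 hc) 0)]

theorem fourier_inv_cosh (y : ℝ) :
    𝓕 (fun x : ℝ ↦ ((cosh (π * x))⁻¹ : ℂ)) y = (cosh (π * y))⁻¹ := by
  have hint : ∫ x : ℝ, Complex.exp (-2 * y * Complex.I * x) / cosh x = π * (cosh (π * y))⁻¹ := by
    rw [integral_cexp_mul_div_cosh (by simp), Complex.ofReal_inv, Complex.ofReal_cosh,
      ← Complex.cos_mul_I, ← Complex.cos_neg]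
    push_cast
    ring_nf
  have hscale := Measure.integral_comp_mul_left
    (fun x : ℝ ↦ Complex.exp (-2 * y * Complex.I * x) / cosh x) π
  rw [hint, abs_of_pos (inv_pos.2 pi_pos), Complex.real_smul] at hscale
  rw [Real.fourier_real_eq_integral_exp_smul]
  convert hscale using 1
  · refine integral_congr_ae (.of_forall fun x ↦ ?_)
    simp only [smul_eq_mul, div_eq_mul_inv]
    push_cast
    ring_nf
  · push_cast
    field_simp

theorem inv_cosh_le (x : ℝ) : (cosh x)⁻¹ ≤ 2 * exp (-|x|) := by
  rw [← cosh_abs, cosh_eq, exp_neg, inv_le_iff_one_le_mul₀ (by positivity)]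
  field_simp
  nlinarith [exp_pos (-|x|)]

theorem integrable_inv_cosh_mul {c : ℝ} (hc : 0 < c) : Integrable fun x ↦ (cosh (c * x))⁻¹ := by
  refine ((integrable_exp_neg_mul_abs hc).const_mul 2).mono'
    (Measurable.aestronglyMeasurable (by fun_prop)) (.of_forall fun x ↦ ?_)
  rw [norm_inv, norm_of_nonneg (cosh_pos _).le]
  simpa [abs_mul, abs_of_pos hc] using inv_cosh_le (c * x)

theorem exp_neg_mul_abs_mul_inv_cosh {c : ℝ} (hc : 0 ≤ c) (x : ℝ) :
    exp (-(2 * c) * |x|) * (cosh (c * x))⁻¹ = 2 * exp (-c * |x|) - (cosh (c * x))⁻¹ := by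
  have hexp : exp (-(2 * c) * |x|) = 2 * exp (-c * |x|) * cosh (c * x) - 1 := by
    have hmul : exp (c * |x|) * exp (-c * |x|) = 1 := by
      rw [← exp_add, neg_mul, add_neg_cancel, exp_zero]
    have hsq : exp (-(2 * c) * |x|) = exp (-c * |x|) * exp (-c * |x|) := by
      rw [← exp_add]
      ring_nf
    rw [hsq, ← cosh_abs, abs_mul, abs_of_nonneg hc, cosh_eq, ← neg_mul]
    linear_combination -hmul
  rw [hexp, sub_mul, one_mul, mul_inv_cancel_right₀ (cosh_pos _).ne']

theorem integral_fourier_mul_comp_sub {f g : ℝ → ℂ} (hf : Integrable f) (hg : Integrable g)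
    (x : ℝ) : ∫ y, 𝓕 f y * g (y - x) = 𝓕 (fun w ↦ f w * 𝓕 g w) x := by
  have hshift (w : ℝ) : 𝓕 (fun y ↦ g (y - x)) w = 𝐞 (-inner ℝ w x) • 𝓕 g w := by
    rw [real_inner_comm, ← inner_neg_left]
    exact congrFun (VectorFourier.fourierIntegral_comp_add_right 𝐞 volume (innerₗ ℝ) g (-x)) w
  have hflip : ∫ y, 𝓕 f y * g (y - x) = ∫ w, f w * 𝓕 (fun y ↦ g (y - x)) w := by
    simpa using! VectorFourier.integral_fourierIntegral_smul_eq_flip (L := innerₗ ℝ)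
      Real.continuous_fourierChar continuous_inner hf (hg.comp_sub_right x)
  rw [hflip, Real.fourier_eq]
  refine integral_congr_ae (.of_forall fun w ↦ ?_)
  simp only [hshift, Circle.smul_def, smul_eq_mul]
  ring

theorem fourier_exp_neg_mul_abs_mul_fourier_inv_cosh (x : ℝ) :
    𝓕 (fun w : ℝ ↦ (exp (-(2 * π) * |w|) : ℂ) * 𝓕 (fun v : ℝ ↦ ((cosh (π * v))⁻¹ : ℂ)) w) x =
      ((4 / (1 + 4 * x ^ 2) / π - (cosh (π * x))⁻¹ : ℝ) : ℂ) := by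
  have hE : Integrable fun w : ℝ ↦ (exp (-π * |w|) : ℂ) :=
    (integrable_exp_neg_mul_abs pi_pos).ofReal
  have hS : Integrable fun w : ℝ ↦ ((cosh (π * w))⁻¹ : ℂ) := by
    exact_mod_cast (integrable_inv_cosh_mul pi_pos).ofReal (𝕜 := ℂ)
  have hprod (w : ℝ) : (exp (-(2 * π) * |w|) : ℂ) * (cosh (π * w))⁻¹ =
      2 * (exp (-π * |w|) : ℂ) - ((cosh (π * w))⁻¹ : ℂ) := by
    exact_mod_cast exp_neg_mul_abs_mul_inv_cosh pi_nonneg w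
  have hlin : 𝓕 (fun w : ℝ ↦ 2 * (exp (-π * |w|) : ℂ) - ((cosh (π * w))⁻¹ : ℂ)) x =
      2 * 𝓕 (fun w : ℝ ↦ (exp (-π * |w|) : ℂ)) x - 𝓕 (fun w : ℝ ↦ ((cosh (π * w))⁻¹ : ℂ)) x := by
    rw [Real.fourier_eq, Real.fourier_eq, Real.fourier_eq, ← integral_const_mul, ← integral_sub]
    · simp only [Circle.smul_def, smul_eq_mul, mul_sub, mul_left_comm]
    · exact ((Real.fourierIntegral_convergent_iff x).2 hE).const_mul 2
    · exact (Real.fourierIntegral_convergent_iff x).2 hS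
  simp only [fourier_inv_cosh, hprod]
  rw [hlin, fourier_exp_neg_mul_abs pi_pos, fourier_inv_cosh]
  norm_cast
  field_simp
  ring

theorem integral_inv_one_add_sq_mul_inv_cosh (x : ℝ) :
    ∫ y, (1 + y ^ 2)⁻¹ * (cosh (π * (y - x)))⁻¹ = 4 / (1 + 4 * x ^ 2) - π * (cosh (π * x))⁻¹ := by
  have hE : Integrable fun w : ℝ ↦ (exp (-(2 * π) * |w|) : ℂ) :=
    (integrable_exp_neg_mul_abs two_pi_pos).ofReal
  have hS : Integrable fun w : ℝ ↦ ((cosh (π * w))⁻¹ : ℂ) := by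
    exact_mod_cast (integrable_inv_cosh_mul pi_pos).ofReal (𝕜 := ℂ)
  have hconv := integral_fourier_mul_comp_sub hE hS x
  rw [fourier_exp_neg_mul_abs_mul_fourier_inv_cosh] at hconv
  have hpoisson (y : ℝ) : 2 * (2 * π / ((2 * π) ^ 2 + (2 * π * y) ^ 2)) = π⁻¹ * (1 + y ^ 2)⁻¹ := by
    field_simp
  simp only [fourier_exp_neg_mul_abs two_pi_pos, hpoisson] at hconv
  norm_cast at hconv
  simp only [mul_assoc, integral_const_mul] at hconv
  rw [inv_mul_eq_iff_eq_mul₀ pi_ne_zero] at hconv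
  rw [hconv]
  field_simp

end Sech

section InvLog

theorem integrableOn_Ioi_iff_integrable_comp_exp {E : Type*} [NormedAddCommGroup E]
    [NormedSpace ℝ E] (f : ℝ → E) :
    IntegrableOn f (Ioi 0) ↔ Integrable fun x ↦ exp x • f (exp x) := by
  have h := integrableOn_image_iff_integrableOn_abs_deriv_smul (s := univ) MeasurableSet.univ
    (fun x _ ↦ (hasDerivAt_exp x).hasDerivWithinAt) exp_injective.injOn f
  simpa only [image_univ, range_exp, abs_exp, integrableOn_univ] using h

theorem integral_Ioi_eq_integral_comp_exp {E : Type*} [NormedAddCommGroup E]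
    [NormedSpace ℝ E] (f : ℝ → E) :
    ∫ u in Ioi 0, f u = ∫ x, exp x • f (exp x) := by
  have h := integral_image_eq_integral_abs_deriv_smul (s := univ) MeasurableSet.univ
    (fun x _ ↦ (hasDerivAt_exp x).hasDerivWithinAt) exp_injective.injOn f
  simpa only [image_univ, range_exp, abs_exp, Measure.restrict_univ] using h

theorem integrableOn_inv_mul_inv_log_sq_add_sq {c : ℝ} (hc : c ≠ 0) :
    IntegrableOn (fun u ↦ u⁻¹ * (log u ^ 2 + c ^ 2)⁻¹) (Ioi 0) := by
  rw [integrableOn_Ioi_iff_integrable_comp_exp]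
  refine ((integrable_inv_one_add_sq.comp_div hc).const_mul (c ^ 2)⁻¹).congr (.of_forall fun x ↦ ?_)
  simp only [log_exp, smul_eq_mul]
  field_simp
  ring

theorem exp_mul_div_exp_sq_add_exp_sq (x y : ℝ) :
    exp y * (exp x / (exp x ^ 2 + exp y ^ 2)) = (cosh (y - x))⁻¹ / 2 := by
  rw [cosh_eq, neg_sub, exp_sub, exp_sub]
  field_simp
  ring

theorem integral_div_sq_add_sq_mul_inv_log_sq {t : ℝ} (ht : 0 < t) :
    ∫ u in Ioi 0, t / (t ^ 2 + u ^ 2) * (log u ^ 2 + π ^ 2)⁻¹ =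
      π / 2 / (log t ^ 2 + π ^ 2 / 4) - t / (t ^ 2 + 1 ^ 2) := by
  obtain ⟨x, rfl⟩ : ∃ x, t = exp (π * x) :=
    ⟨log t / π, by rw [mul_div_cancel₀ _ pi_ne_zero, exp_log ht]⟩
  set f : ℝ → ℝ := fun u ↦ exp (π * x) / (exp (π * x) ^ 2 + u ^ 2) * (log u ^ 2 + π ^ 2)⁻¹
  have hf (y : ℝ) : exp (π * y) • f (exp (π * y)) =
      (1 + y ^ 2)⁻¹ * (cosh (π * (y - x)))⁻¹ / (2 * π ^ 2) := by
    have hcosh := exp_mul_div_exp_sq_add_exp_sq (π * x) (π * y)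
    rw [← mul_sub] at hcosh
    simp only [f, log_exp, smul_eq_mul]
    rw [← mul_assoc, hcosh]
    field_simp
    ring
  have hcosh := exp_mul_div_exp_sq_add_exp_sq (π * x) 0
  have hscale := Measure.integral_comp_mul_left (fun y ↦ exp y • f (exp y)) π
  simp only [hf, integral_div, integral_inv_one_add_sq_mul_inv_cosh,
    abs_of_pos (inv_pos.2 pi_pos)] at hscale
  rw [smul_eq_mul, eq_inv_mul_iff_mul_eq₀ pi_ne_zero] at hscale
  rw [exp_zero, one_mul, zero_sub, cosh_neg] at hcosh
  rw [log_exp, hcosh, integral_Ioi_eq_integral_comp_exp, ← hscale]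
  field_simp
  ring

end InvLog

section SineIntegral

variable {φ φ' : ℝ → ℝ} {lam a T : ℝ}

theorem integral_sin_mul_eq (hlam : lam ≠ 0) (hφ : ∀ t ∈ uIcc a T, HasDerivAt φ (φ' t) t)
    (hφ' : IntervalIntegrable φ' volume a T) :
    ∫ t in a..T, sin (lam * t) * φ t =
      (φ a * cos (lam * a) - φ T * cos (lam * T) + ∫ t in a..T, φ' t * cos (lam * t)) / lam := by
  have hsin (t : ℝ) : HasDerivAt (fun t ↦ -cos (lam * t) / lam) (sin (lam * t)) t := by
    refine ((((hasDerivAt_id t).const_mul lam).cos.fun_neg).div_const lam).congr_deriv ?_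
    simp only [id_eq]
    field_simp
  have hparts := intervalIntegral.integral_mul_deriv_eq_deriv_mul hφ (fun t _ ↦ hsin t) hφ'
    (Continuous.intervalIntegrable (by fun_prop) a T)
  simp only [mul_comm (sin _), hparts, ← mul_div_assoc, mul_neg, intervalIntegral.integral_div,
    intervalIntegral.integral_neg]
  ring

theorem abs_integral_sin_mul_le (hlam : 0 < lam) (haT : a ≤ T)
    (hφ : ∀ t ∈ Ici a, HasDerivAt φ (φ' t) t) (hφ' : IntegrableOn φ' (Ioi a)) :
    |∫ t in a..T, sin (lam * t) * φ t| ≤ (|φ a| + |φ T| + ∫ t in Ioi a, |φ' t|) / lam := by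
  have hint : IntervalIntegrable φ' volume a T :=
    (intervalIntegrable_iff_integrableOn_Ioc_of_le haT).2 (hφ'.mono_set Ioc_subset_Ioi_self)
  have hcos (c t : ℝ) : |c * cos (lam * t)| ≤ |c| := by
    rw [abs_mul]
    exact mul_le_of_le_one_right (abs_nonneg c) (abs_cos_le_one _)
  have hrem : |∫ t in a..T, φ' t * cos (lam * t)| ≤ ∫ t in Ioi a, |φ' t| := by
    calc |∫ t in a..T, φ' t * cos (lam * t)|
      _ ≤ ∫ t in a..T, |φ' t| := by
        rw [← norm_eq_abs]
        exact intervalIntegral.norm_integral_le_of_norm_le haT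
          (.of_forall fun t _ ↦ hcos (φ' t) t) hint.abs
      _ ≤ ∫ t in Ioi a, |φ' t| := by
        rw [intervalIntegral.integral_of_le haT]
        exact setIntegral_mono_set hφ'.abs (.of_forall fun t ↦ abs_nonneg _)
          Ioc_subset_Ioi_self.eventuallyLE
  rw [integral_sin_mul_eq hlam.ne' (fun t ht ↦ hφ t (uIcc_of_le haT ▸ ht).1) hint,
    abs_div, abs_of_pos hlam]
  gcongr
  exact (abs_add_le _ _).trans
    (add_le_add ((abs_sub _ _).trans (add_le_add (hcos _ _) (hcos _ _))) hrem)

theorem tendsto_integral_sin_mul (hlam : lam ≠ 0) (hφ : ∀ t ∈ Ici a, HasDerivAt φ (φ' t) t)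
    (hφ' : IntegrableOn φ' (Ioi a)) (hlim : Tendsto φ atTop (𝓝 0)) :
    Tendsto (fun T ↦ ∫ t in a..T, sin (lam * t) * φ t) atTop
      (𝓝 ((φ a * cos (lam * a) + ∫ t in Ioi a, φ' t * cos (lam * t)) / lam)) := by
  have hint : IntegrableOn (fun t ↦ φ' t * cos (lam * t)) (Ioi a) :=
    hφ'.mul_bdd (c := 1) (by fun_prop) (.of_forall fun t ↦ abs_cos_le_one _)
  have hbdry : Tendsto (fun T ↦ φ T * cos (lam * T)) atTop (𝓝 0) :=
    hlim.zero_mul_isBoundedUnder_le (isBoundedUnder_of ⟨1, fun T ↦ abs_cos_le_one _⟩)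
  have hparts := ((hbdry.const_sub (φ a * cos (lam * a))).add
    (intervalIntegral_tendsto_integral_Ioi a hint tendsto_id)).div_const lam
  rw [sub_zero] at hparts
  refine hparts.congr' ?_
  filter_upwards [eventually_ge_atTop a] with T haT
  refine (integral_sin_mul_eq hlam (fun t ht ↦ hφ t ?_) ?_).symm
  · exact (uIcc_of_le haT ▸ ht).1
  · exact (intervalIntegrable_iff_integrableOn_Ioc_of_le haT).2 (hφ'.mono_set Ioc_subset_Ioi_self)

end SineIntegral

section ConjugatePoissonKernel

variable {u : ℝ}

theorem hasDerivAt_div_sq_add_sq (hu : u ≠ 0) (t : ℝ) :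
    HasDerivAt (fun t ↦ t / (t ^ 2 + u ^ 2)) ((u ^ 2 - t ^ 2) / (u ^ 2 + t ^ 2) ^ 2) t := by
  have hne : t ^ 2 + u ^ 2 ≠ 0 := by positivity
  refine ((hasDerivAt_id t).div ((hasDerivAt_pow 2 t).add_const (u ^ 2)) hne).congr_deriv ?_
  simp only [id_eq, Nat.cast_ofNat, add_comm (u ^ 2)]
  field_simp
  ring

theorem abs_sq_sub_sq_div_sq_le (u t : ℝ) :
    |(u ^ 2 - t ^ 2) / (u ^ 2 + t ^ 2) ^ 2| ≤ (u ^ 2 + t ^ 2)⁻¹ := by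
  have hnum : |u ^ 2 - t ^ 2| ≤ u ^ 2 + t ^ 2 :=
    abs_le.2 ⟨by linarith [sq_nonneg u], by linarith [sq_nonneg t]⟩
  calc |(u ^ 2 - t ^ 2) / (u ^ 2 + t ^ 2) ^ 2|
    _ ≤ (u ^ 2 + t ^ 2) / (u ^ 2 + t ^ 2) ^ 2 := by
      rw [abs_div, abs_sq]
      gcongr
    _ = (u ^ 2 + t ^ 2)⁻¹ := by rw [sq (u ^ 2 + t ^ 2), div_self_mul_self']

theorem inv_sq_add_sq_eq (hu : u ≠ 0) (t : ℝ) :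
    (u ^ 2 + t ^ 2)⁻¹ = (u ^ 2)⁻¹ * (1 + (t / u) ^ 2)⁻¹ := by
  field_simp

theorem integrable_inv_sq_add_sq (hu : u ≠ 0) : Integrable fun t ↦ (u ^ 2 + t ^ 2)⁻¹ := by
  simp only [inv_sq_add_sq_eq hu]
  exact (integrable_inv_one_add_sq.comp_div hu).const_mul _

theorem integral_Ioi_inv_sq_add_sq (hu : 0 < u) :
    ∫ t in Ioi 0, (u ^ 2 + t ^ 2)⁻¹ = π / 2 * u⁻¹ := by
  have hscale := integral_comp_mul_left_Ioi (fun t : ℝ ↦ (1 + t ^ 2)⁻¹) 0 (inv_pos.2 hu)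
  simp only [inv_sq_add_sq_eq hu.ne', div_eq_inv_mul _ u, integral_const_mul, hscale,
    mul_zero, inv_inv, integral_Ioi_inv_one_add_sq, arctan_zero, sub_zero, smul_eq_mul]
  field_simp

theorem integrable_sq_sub_sq_div_sq (hu : u ≠ 0) :
    Integrable fun t ↦ (u ^ 2 - t ^ 2) / (u ^ 2 + t ^ 2) ^ 2 :=
  (integrable_inv_sq_add_sq hu).mono' (Measurable.aestronglyMeasurable (by fun_prop))
    (.of_forall fun t ↦ abs_sq_sub_sq_div_sq_le u t)

theorem abs_div_sq_add_sq_le (hu : 0 < u) (t : ℝ) : |t / (t ^ 2 + u ^ 2)| ≤ u⁻¹ / 2 := by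
  rw [abs_div, abs_of_pos (by positivity : 0 < t ^ 2 + u ^ 2), div_le_iff₀ (by positivity),
    ← sq_abs t]
  field_simp
  nlinarith [sq_nonneg (|t| - u)]

theorem abs_integral_sin_mul_div_sq_add_sq_le {lam T : ℝ} (hlam : 0 < lam) (hu : 0 < u)
    (hT : 0 ≤ T) :
    |∫ t in 0..T, sin (lam * t) * (t / (t ^ 2 + u ^ 2))| ≤ (1 + π) / (2 * lam) * u⁻¹ := by
  have hderiv : ∫ t in Ioi 0, |(u ^ 2 - t ^ 2) / (u ^ 2 + t ^ 2) ^ 2| ≤ π / 2 * u⁻¹ := by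
    rw [← integral_Ioi_inv_sq_add_sq hu]
    exact setIntegral_mono (integrable_sq_sub_sq_div_sq hu.ne').abs.integrableOn
      (integrable_inv_sq_add_sq hu.ne').integrableOn (abs_sq_sub_sq_div_sq_le u)
  calc |∫ t in 0..T, sin (lam * t) * (t / (t ^ 2 + u ^ 2))|
    _ ≤ (|0 / (0 ^ 2 + u ^ 2)| + |T / (T ^ 2 + u ^ 2)| +
          ∫ t in Ioi 0, |(u ^ 2 - t ^ 2) / (u ^ 2 + t ^ 2) ^ 2|) / lam :=
      abs_integral_sin_mul_le hlam hT (fun t _ ↦ hasDerivAt_div_sq_add_sq hu.ne' t)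
        (integrable_sq_sub_sq_div_sq hu.ne').integrableOn
    _ ≤ (0 + u⁻¹ / 2 + π / 2 * u⁻¹) / lam := by
      rw [zero_div, abs_zero]
      gcongr
      exact abs_div_sq_add_sq_le hu T
    _ = (1 + π) / (2 * lam) * u⁻¹ := by
      field_simp
      ring

theorem integral_sq_sub_sq_div_sq_mul_cos {lam : ℝ} (hlam : 0 ≤ lam) (hu : 0 < u) :
    ∫ t in Ioi 0, (u ^ 2 - t ^ 2) / (u ^ 2 + t ^ 2) ^ 2 * cos (lam * t) =
      π / 2 * (lam * exp (-u * lam)) :=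
  integral_mul_cos_of_integral_mul_cos_eq (by fun_prop) (integrableOn_mul_exp_neg_mul hu)
    (integrable_sq_sub_sq_div_sq hu.ne').integrableOn (integral_mul_exp_neg_mul_mul_cos hu) hlam

theorem tendsto_div_sq_add_sq_atTop (u : ℝ) :
    Tendsto (fun t ↦ t / (t ^ 2 + u ^ 2)) atTop (𝓝 0) := by
  refine squeeze_zero' ?_ ?_ tendsto_inv_atTop_zero
  · filter_upwards [eventually_ge_atTop 0] with t ht using by positivity
  · filter_upwards [eventually_gt_atTop 0] with t ht
    rw [div_le_iff₀ (by positivity)]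
    field_simp
    linarith [sq_nonneg u]

theorem tendsto_integral_sin_mul_div_sq_add_sq {lam : ℝ} (hlam : 0 < lam) (hu : 0 < u) :
    Tendsto (fun T ↦ ∫ t in 0..T, sin (lam * t) * (t / (t ^ 2 + u ^ 2))) atTop
      (𝓝 (π / 2 * exp (-lam * u))) := by
  have h := tendsto_integral_sin_mul hlam.ne' (a := 0)
    (fun t _ ↦ hasDerivAt_div_sq_add_sq hu.ne' t)
    (integrable_sq_sub_sq_div_sq hu.ne').integrableOn (tendsto_div_sq_add_sq_atTop u)
  rw [integral_sq_sub_sq_div_sq_mul_cos hlam.le hu] at h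
  convert h using 2
  rw [show -lam * u = -u * lam by ring]
  field_simp
  simp

end ConjugatePoissonKernel

section KernelAverage

variable {μ : Measure ℝ} {lam : ℝ}

theorem integrable_sin_mul_div_sq_add_sq [SFinite μ] (hpos : ∀ᵐ u ∂μ, 0 < u)
    (hinv : Integrable (fun u ↦ u⁻¹) μ) (lam : ℝ) (ν : Measure ℝ) [IsFiniteMeasure ν] :
    Integrable (Function.uncurry fun t u ↦ sin (lam * t) * (t / (t ^ 2 + u ^ 2))) (ν.prod μ) := by
  refine ((integrable_const (1 / 2 : ℝ)).mul_prod hinv).mono'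
    (Measurable.aestronglyMeasurable (by unfold Function.uncurry; fun_prop)) ?_
  filter_upwards [Measure.quasiMeasurePreserving_snd.ae hpos] with p hp
  rw [Function.uncurry, norm_mul, one_div_mul_eq_div]
  exact (mul_le_of_le_one_left (norm_nonneg _) (abs_sin_le_one _)).trans
    (abs_div_sq_add_sq_le hp p.1)

theorem integral_sin_mul_integral_div_sq_add_sq [SFinite μ] (hpos : ∀ᵐ u ∂μ, 0 < u)
    (hinv : Integrable (fun u ↦ u⁻¹) μ) (lam T : ℝ) :
    ∫ t in 0..T, sin (lam * t) * ∫ u, t / (t ^ 2 + u ^ 2) ∂μ =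
      ∫ u, (∫ t in 0..T, sin (lam * t) * (t / (t ^ 2 + u ^ 2))) ∂μ := by
  simp only [← integral_const_mul]
  have : IsFiniteMeasure (volume.restrict (uIoc 0 T)) := by
    unfold uIoc
    infer_instance
  exact intervalIntegral_integral_swap (integrable_sin_mul_div_sq_add_sq hpos hinv lam _)

theorem tendsto_integral_sin_mul_integral_div_sq_add_sq [SFinite μ] (hlam : 0 < lam)
    (hpos : ∀ᵐ u ∂μ, 0 < u) (hinv : Integrable (fun u ↦ u⁻¹) μ) :
    Tendsto (fun T ↦ ∫ t in 0..T, sin (lam * t) * ∫ u, t / (t ^ 2 + u ^ 2) ∂μ) atTop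
      (𝓝 (π / 2 * ∫ u, exp (-lam * u) ∂μ)) := by
  simp_rw [integral_sin_mul_integral_div_sq_add_sq hpos hinv, ← integral_const_mul]
  refine tendsto_integral_filter_of_dominated_convergence (fun u ↦ (1 + π) / (2 * lam) * u⁻¹)
    (.of_forall fun T ↦ StronglyMeasurable.aestronglyMeasurable ?_) ?_ (hinv.const_mul _) ?_
  · have hmeas : StronglyMeasurable
        (Function.uncurry fun u t ↦ sin (lam * t) * (t / (t ^ 2 + u ^ 2))) :=
      Measurable.stronglyMeasurable (by unfold Function.uncurry; fun_prop)
    unfold intervalIntegral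
    exact hmeas.integral_prod_right.sub hmeas.integral_prod_right
  · filter_upwards [eventually_ge_atTop 0] with T hT
    filter_upwards [hpos] with u hu using abs_integral_sin_mul_div_sq_add_sq_le hlam hu hT
  · filter_upwards [hpos] with u hu using tendsto_integral_sin_mul_div_sq_add_sq hlam hu

end KernelAverage

section InvLogMeasure

variable {f : ℝ → ℝ}

/-- The measure `ρ = δ₁ + du / (log u ^ 2 + π ^ 2)` on `(0, ∞)` that represents the imaginary part
of `1 / log` on the imaginary axis. The density is the jump of `1 / log` across its cut, up to a
constant, and the atom is its pole at `1`: in `1 / log z = 1 / (z - 1) + ∫ u, 1 / (z + u)`, with the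
integral against that density, the imaginary part at `z = i t` does not see the sign of the pole. -/
noncomputable def invLogMeasure : Measure ℝ :=
  Measure.dirac 1 +
    (volume.restrict (Ioi 0)).withDensity fun u ↦ ENNReal.ofReal (log u ^ 2 + π ^ 2)⁻¹

instance : SFinite invLogMeasure := by
  unfold invLogMeasure
  infer_instance

theorem integrable_invLogMeasure_iff :
    Integrable f invLogMeasure ↔
      IntegrableOn (fun u ↦ f u * (log u ^ 2 + π ^ 2)⁻¹) (Ioi 0) := by
  have hnonneg (u : ℝ) : 0 ≤ (log u ^ 2 + π ^ 2)⁻¹ := by positivity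
  rw [invLogMeasure, integrable_add_measure, and_iff_right (integrable_dirac (by finiteness)),
    integrable_withDensity_iff_integrable_smul' (by fun_prop)
      (.of_forall fun _ ↦ ENNReal.ofReal_lt_top)]
  simp only [ENNReal.toReal_ofReal (hnonneg _), smul_eq_mul, mul_comm, IntegrableOn]

theorem integral_invLogMeasure (hf : Integrable f invLogMeasure) :
    ∫ u, f u ∂invLogMeasure = f 1 + ∫ u in Ioi 0, f u * (log u ^ 2 + π ^ 2)⁻¹ := by
  have hnonneg (u : ℝ) : 0 ≤ (log u ^ 2 + π ^ 2)⁻¹ := by positivity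
  rw [invLogMeasure] at hf ⊢
  rw [integral_add_measure hf.left_of_add_measure hf.right_of_add_measure, integral_dirac,
    integral_withDensity_eq_integral_toReal_smul (by fun_prop)
      (.of_forall fun _ ↦ ENNReal.ofReal_lt_top)]
  simp only [ENNReal.toReal_ofReal (hnonneg _), smul_eq_mul, mul_comm]

theorem ae_invLogMeasure_pos : ∀ᵐ u ∂invLogMeasure, 0 < u := by
  rw [invLogMeasure, ae_add_measure_iff]
  exact ⟨by simp [ae_dirac_eq], (withDensity_absolutelyContinuous _ _).ae_le
    (ae_restrict_mem measurableSet_Ioi)⟩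

theorem integrable_inv_invLogMeasure : Integrable (fun u ↦ u⁻¹) invLogMeasure :=
  integrable_invLogMeasure_iff.2 (integrableOn_inv_mul_inv_log_sq_add_sq pi_ne_zero)

theorem integral_invLogMeasure_div_sq_add_sq {t : ℝ} (ht : 0 < t) :
    ∫ u, t / (t ^ 2 + u ^ 2) ∂invLogMeasure = π / 2 / (log t ^ 2 + π ^ 2 / 4) := by
  have hint : Integrable (fun u ↦ t / (t ^ 2 + u ^ 2)) invLogMeasure := by
    refine (integrable_inv_invLogMeasure.div_const 2).mono'
      (Measurable.aestronglyMeasurable (by fun_prop)) ?_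
    filter_upwards [ae_invLogMeasure_pos] with u hu using abs_div_sq_add_sq_le hu t
  rw [integral_invLogMeasure hint, integral_div_sq_add_sq_mul_inv_log_sq ht, add_sub_cancel]

theorem integral_invLogMeasure_exp_neg_mul {lam : ℝ} (hlam : 0 < lam) :
    ∫ u, exp (-lam * u) ∂invLogMeasure = W lam + exp (-lam) := by
  have hint : Integrable (fun u ↦ exp (-lam * u)) invLogMeasure := by
    refine (integrable_inv_invLogMeasure.const_mul lam⁻¹).mono' (by fun_prop) ?_
    filter_upwards [ae_invLogMeasure_pos] with u hu
    rw [norm_of_nonneg (exp_pos _).le, neg_mul, exp_neg, ← mul_inv]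
    gcongr
    linarith [add_one_le_exp (lam * u)]
  simp only [integral_invLogMeasure hint, ← div_eq_mul_inv]
  rw [mul_one, add_comm, W]

end InvLogMeasure

theorem stmt13 (lam : ℝ) (hlam : 0 < lam) :
    Tendsto
      (fun T : ℝ => ∫ t in (0 : ℝ)..T, Real.sin (lam * t) / ((Real.log t) ^ 2 + Real.pi ^ 2 / 4))
      atTop (nhds (W lam + Real.exp (-lam))) := by
  have hlim := (tendsto_integral_sin_mul_integral_div_sq_add_sq hlam ae_invLogMeasure_pos
    integrable_inv_invLogMeasure).const_mul (2 / π)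
  rw [integral_invLogMeasure_exp_neg_mul hlam, ← mul_assoc, div_mul_div_cancel₀ pi_ne_zero,
    div_self two_ne_zero, one_mul] at hlim
  refine hlim.congr' ?_
  filter_upwards [eventually_ge_atTop 0] with T hT
  rw [← intervalIntegral.integral_const_mul]
  refine intervalIntegral.integral_congr_ae (.of_forall fun t ht ↦ ?_)
  rw [uIoc_of_le hT] at ht
  rw [integral_invLogMeasure_div_sq_add_sq ht.1]
  field_simp
end

section
/- For every λ > 0, W(λ) = (2/π) ∫_0^∞ (log t) cos(λt) / ((log t)² + π²/4) dt + e^{-λ}, where W(λ) = ∫_0^∞ e^{-λu}/((log u)² + π²) du and the cosine integral is a conditionally convergent improper integral. -/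
open Filter

/-!
Both integrals come from `∫ exp (i λ z) / (log z ± i π / 2) dz`. With the sign `+` there is no pole
in the first quadrant, and rotating the positive real axis to the positive imaginary axis turns
`log z + i π / 2` into `log u + i π`, so the real part becomes `π W(λ)`. With the sign `-` the pole
`z = i` lies in the upper half-plane, whose boundary is preserved by the reflection `z ↦ -conj z`;
the residue theorem gives the real part `-π exp (-λ)` along the positive real axis. In the sum of
the two real parts the terms in `sin (λ t)` cancel. All contours are taken in the coordinate
`s = log z`, where the quadrant and the half-plane are the strips of width `π / 2` and `π`, and
Jordan's inequality `sin y ≥ 2 y / π` bounds the numerator in `L¹` on the vertical sides, so that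
the factor `1 / (s ± i π / 2)` makes their contribution vanish.
-/

open MeasureTheory Topology Complex Bornology
open scoped ComplexConjugate Interval Real

section Strip

variable {E : Type*} [NormedAddCommGroup E] [NormedSpace ℂ E]

lemma tendsto_integral_sub_integral_add_mul_I {f : ℂ → E} {b : ℝ}
    (hf : DifferentiableOn ℂ f (im ⁻¹' [[0, b]]))
    (hv : Tendsto (fun X : ℝ => ∫ y in (0 : ℝ)..b, f (X + y * I)) (cobounded ℝ) (𝓝 0)) :
    Tendsto (fun R : ℝ => (∫ x in (-R)..R, f x) - ∫ x in (-R)..R, f (x + b * I))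
      atTop (𝓝 0) := by
  have hrect (R : ℝ) : I • ((∫ y in (0 : ℝ)..b, f ((-R : ℝ) + y * I)) -
      ∫ y in (0 : ℝ)..b, f (R + y * I)) =
      (∫ x in (-R)..R, f x) - ∫ x in (-R)..R, f (x + b * I) := by
    have h := integral_boundary_rect_eq_zero_of_differentiableOn f (-R : ℝ) (R + b * I)
      (hf.mono fun z hz => by simpa using hz.2)
    simp only [ofReal_re, ofReal_im, add_re, add_im, re_ofReal_mul, im_ofReal_mul, I_re, I_im,
      mul_zero, mul_one, add_zero, zero_add, ofReal_zero, zero_mul] at h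
    rw [smul_sub, ← sub_eq_zero, ← neg_eq_zero, ← h]
    abel
  have hatTop : (atTop : Filter ℝ) ≤ cobounded ℝ :=
    IsOrderBornology.atTop_le_cobounded
  have hright := hv.mono_left hatTop
  have hleft := hv.comp (tendsto_neg_cobounded.mono_left hatTop)
  simpa only [Function.comp_def, id, hrect, sub_self, smul_zero] using
    (hleft.sub hright).const_smul I

end Strip

section SimplePole

variable {g : ℂ → ℂ} {α b C : ℝ}

lemma tendsto_integral_div_sub_mul_I_cobounded (hb : 0 ≤ b)
    (hg : ContinuousOn g (im ⁻¹' [[0, b]]))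
    (hC : ∀ X : ℝ, ∫ y in (0 : ℝ)..b, ‖g (X + y * I)‖ ≤ C) :
    Tendsto (fun X : ℝ => ∫ y in (0 : ℝ)..b, g (X + y * I) / (X + y * I - α * I))
      (cobounded ℝ) (𝓝 0) := by
  have hbound (X : ℝ) (hX : X ≠ 0) :
      ‖∫ y in (0 : ℝ)..b, g (X + y * I) / (X + y * I - α * I)‖ ≤ C / |X| := by
    have hint : IntervalIntegrable (fun y : ℝ => ‖g (X + y * I)‖ / |X|) volume 0 b :=
      ((hg.comp (by fun_prop) fun y hy => by simpa using hy).norm.div_const _).intervalIntegrable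
    calc _ ≤ ∫ y in (0 : ℝ)..b, ‖g (X + y * I)‖ / |X| :=
          intervalIntegral.norm_integral_le_of_norm_le hb (ae_of_all _ fun y _ => by
            rw [norm_div]
            gcongr
            simpa using abs_re_le_norm ((X : ℂ) + y * I - α * I)) hint
      _ ≤ C / |X| := by
          rw [intervalIntegral.integral_div]
          gcongr
          exact hC X
  refine squeeze_zero_norm' ((eventually_ne_cobounded 0).mono hbound) ?_
  exact tendsto_const_nhds.div_atTop tendsto_norm_cobounded_atTop

lemma integral_inv_sub_mul_I (hα : α ≠ 0) (R : ℝ) :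
    ∫ x in (-R)..R, ((x : ℂ) - α * I)⁻¹ = 2 * Real.arctan (R / α) * I := by
  have hderiv (x : ℝ) : HasDerivAt
      (fun x : ℝ => ((Real.log (x ^ 2 + α ^ 2) / 2 : ℝ) : ℂ) + (Real.arctan (x / α) : ℝ) * I)
      ((x : ℂ) - α * I)⁻¹ x := by
    have hre : HasDerivAt (fun x : ℝ => Real.log (x ^ 2 + α ^ 2) / 2) (x / (x ^ 2 + α ^ 2)) x := by
      have hsq := (hasDerivAt_pow 2 x).add_const (α ^ 2)
      refine ((hsq.log (by positivity)).div_const 2).congr_deriv ?_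
      field_simp
      simp [mul_comm]
    have him : HasDerivAt (fun x : ℝ => Real.arctan (x / α)) (α / (x ^ 2 + α ^ 2)) x := by
      refine ((hasDerivAt_id x).div_const α).arctan.congr_deriv ?_
      simp only [id]
      field_simp
      ring
    refine (hre.ofReal_comp.add (him.ofReal_comp.mul_const I)).congr_deriv ?_
    have hsq : (x : ℂ) ^ 2 + α ^ 2 ≠ 0 := mod_cast (by positivity : x ^ 2 + α ^ 2 ≠ 0)
    refine eq_inv_of_mul_eq_one_left ?_
    push_cast
    field_simp
    linear_combination (-α ^ 2 : ℂ) * I_sq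
  have hcont : Continuous fun x : ℝ => ((x : ℂ) - α * I)⁻¹ :=
    Continuous.inv₀ (by fun_prop) fun x h => hα (by simpa using congrArg im h)
  rw [intervalIntegral.integral_eq_sub_of_hasDerivAt (fun x _ => hderiv x)
    (hcont.intervalIntegrable _ _), neg_sq, neg_div, Real.arctan_neg]
  push_cast
  ring

lemma tendsto_integral_inv_sub_integral_inv_of_mem_Ioo (hα : α ∈ Set.Ioo 0 b) :
    Tendsto (fun R : ℝ => (∫ x in (-R)..R, ((x : ℂ) - α * I)⁻¹) -
      ∫ x in (-R)..R, ((x : ℂ) + b * I - α * I)⁻¹) atTop (𝓝 (2 * π * I)) := by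
  have harctan {c : ℝ} (hc : 0 < c) :
      Tendsto (fun R : ℝ => (Real.arctan (R / c) : ℂ)) atTop (𝓝 (π / 2 : ℝ)) :=
    (continuous_ofReal.tendsto _).comp <| (Real.tendsto_arctan_atTop.mono_right
      nhdsWithin_le_nhds).comp (tendsto_id.atTop_div_const hc)
  have htop (R : ℝ) : ∫ x in (-R)..R, ((x : ℂ) + b * I - α * I)⁻¹ =
      -(2 * Real.arctan (R / (b - α)) * I) := by
    have h := integral_inv_sub_mul_I (sub_neg.2 hα.2).ne R
    rw [← neg_sub b α, div_neg, Real.arctan_neg] at h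
    push_cast at h ⊢
    rw [← neg_mul, ← mul_neg, ← h]
    congr! 3
    ring
  simp only [integral_inv_sub_mul_I hα.1.ne', htop]
  convert (((harctan hα.1).add (harctan (sub_pos.2 hα.2))).const_mul (2 * I)) using 2
  · ring
  · push_cast; ring

lemma integral_dslope_mul_I (hg : DifferentiableOn ℂ g (im ⁻¹' [[0, b]])) {y : ℝ}
    (hy : y ∈ [[0, b]]) (hyα : y ≠ α) (R : ℝ) :
    ∫ x in (-R)..R, dslope g (α * I) (x + y * I) =
      (∫ x in (-R)..R, g (x + y * I) / (x + y * I - α * I)) -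
        g (α * I) * ∫ x in (-R)..R, ((x : ℂ) + y * I - α * I)⁻¹ := by
  have hne (x : ℝ) : (x : ℂ) + y * I - α * I ≠ 0 := fun h =>
    hyα (sub_eq_zero.1 (by simpa using congrArg im h))
  have hgy : Continuous fun x : ℝ => g (x + y * I) :=
    hg.continuousOn.comp_continuous (by fun_prop) fun x => by simpa using hy
  have hgdiv : Continuous fun x : ℝ => g (x + y * I) / (x + y * I - α * I) :=
    hgy.div (by fun_prop) hne
  have hinv : Continuous fun x : ℝ => ((x : ℂ) + y * I - α * I)⁻¹ := .inv₀ (by fun_prop) hne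
  rw [← intervalIntegral.integral_const_mul, ← intervalIntegral.integral_sub
    (hgdiv.intervalIntegrable _ _) ((hinv.const_mul (g (α * I))).intervalIntegrable _ _)]
  refine intervalIntegral.integral_congr fun x _ => ?_
  simp only [dslope_of_ne g (sub_ne_zero.1 (hne x)), slope_def_field]
  ring

lemma tendsto_integral_dslope_cobounded (hα : α ∈ Set.Ioo 0 b)
    (hg : DifferentiableOn ℂ g (im ⁻¹' [[0, b]]))
    (hC : ∀ X : ℝ, ∫ y in (0 : ℝ)..b, ‖g (X + y * I)‖ ≤ C) :
    Tendsto (fun X : ℝ => ∫ y in (0 : ℝ)..b, dslope g (α * I) (X + y * I))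
      (cobounded ℝ) (𝓝 0) := by
  have hb : 0 ≤ b := (hα.1.trans hα.2).le
  have hsub (X : ℝ) : ∫ y in (0 : ℝ)..b, ‖g (X + y * I) - g (α * I)‖ ≤
      C + b * ‖g (α * I)‖ := by
    have hgX : ContinuousOn (fun y : ℝ => g (X + y * I)) [[0, b]] :=
      hg.continuousOn.comp (by fun_prop) fun y hy => by simpa using hy
    calc _ ≤ ∫ y in (0 : ℝ)..b, (‖g (X + y * I)‖ + ‖g (α * I)‖) :=
          intervalIntegral.integral_mono_on hb
            (hgX.sub continuousOn_const).norm.intervalIntegrable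
            (hgX.norm.add continuousOn_const).intervalIntegrable fun y _ => norm_sub_le _ _
      _ ≤ C + b * ‖g (α * I)‖ := by
          rw [intervalIntegral.integral_add hgX.norm.intervalIntegrable (by simp)]
          simpa using hC X
  refine (tendsto_integral_div_sub_mul_I_cobounded (α := α) hb
    (hg.continuousOn.sub continuousOn_const) hsub).congr' ?_
  filter_upwards [eventually_ne_cobounded 0] with X hX
  refine intervalIntegral.integral_congr fun y _ => ?_
  have hne : (X : ℂ) + y * I ≠ α * I := fun h => hX (by simpa using congrArg re h)
  simp only [dslope_of_ne g hne, slope_def_field, Pi.sub_apply]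

lemma tendsto_integral_div_sub_of_notMem (hb : 0 ≤ b) (hα : α ∉ [[0, b]])
    (hg : DifferentiableOn ℂ g (im ⁻¹' [[0, b]]))
    (hC : ∀ X : ℝ, ∫ y in (0 : ℝ)..b, ‖g (X + y * I)‖ ≤ C) :
    Tendsto (fun R : ℝ => (∫ x in (-R)..R, g x / (x - α * I)) -
      ∫ x in (-R)..R, g (x + b * I) / (x + b * I - α * I)) atTop (𝓝 0) := by
  have hne (z : ℂ) (hz : z ∈ im ⁻¹' [[0, b]]) : z - α * I ≠ 0 := fun h =>
    hα (by simpa [sub_eq_zero.1 h] using hz)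
  exact tendsto_integral_sub_integral_add_mul_I (hg.div (by fun_prop) hne)
    (tendsto_integral_div_sub_mul_I_cobounded hb hg.continuousOn hC)

lemma tendsto_integral_div_sub_of_mem_Ioo (hα : α ∈ Set.Ioo 0 b)
    (hg : DifferentiableOn ℂ g (im ⁻¹' [[0, b]]))
    (hC : ∀ X : ℝ, ∫ y in (0 : ℝ)..b, ‖g (X + y * I)‖ ≤ C) :
    Tendsto (fun R : ℝ => (∫ x in (-R)..R, g x / (x - α * I)) -
      ∫ x in (-R)..R, g (x + b * I) / (x + b * I - α * I)) atTop
      (𝓝 (2 * π * I * g (α * I))) := by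
  have hnhds : im ⁻¹' [[0, b]] ∈ 𝓝 ((α : ℂ) * I) :=
    continuous_im.continuousAt.preimage_mem_nhds <| by
      simpa [Set.uIcc_of_le (hα.1.trans hα.2).le] using Icc_mem_nhds hα.1 hα.2
  have hdslope := tendsto_integral_sub_integral_add_mul_I
    ((differentiableOn_dslope hnhds).2 hg) (tendsto_integral_dslope_cobounded hα hg hC)
  have hbottom := integral_dslope_mul_I hg Set.left_mem_uIcc hα.1.ne
  simp only [ofReal_zero, zero_mul, add_zero] at hbottom
  simp only [hbottom, integral_dslope_mul_I hg Set.right_mem_uIcc hα.2.ne'] at hdslope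
  convert hdslope.add ((tendsto_integral_inv_sub_integral_inv_of_mem_Ioo hα).const_mul
    (g (α * I))) using 2
  · ring
  · ring

end SimplePole

lemma integral_exp_neg_mul_sin_le {A : ℝ} (hA : 0 < A) :
    ∫ y in (0 : ℝ)..π, Real.exp (-(A * Real.sin y)) ≤ π / A := by
  have hint (a b : ℝ) :
      IntervalIntegrable (fun y => Real.exp (-(A * Real.sin y))) volume a b :=
    Continuous.intervalIntegrable (by fun_prop) a b
  have hsymm : ∫ y in (π / 2)..π, Real.exp (-(A * Real.sin y)) =
      ∫ y in (0 : ℝ)..(π / 2), Real.exp (-(A * Real.sin y)) := by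
    have h := intervalIntegral.integral_comp_sub_left (a := 0) (b := π / 2)
      (fun y => Real.exp (-(A * Real.sin y))) π
    simp only [Real.sin_pi_sub, sub_zero, sub_half] at h
    exact h.symm
  have hhalf : ∫ y in (0 : ℝ)..(π / 2), Real.exp (-(A * Real.sin y)) ≤ π / (2 * A) :=
    calc _ ≤ ∫ y in (0 : ℝ)..(π / 2), Real.exp (-(2 * A / π) * y) := by
          refine intervalIntegral.integral_mono_on (by positivity) (hint _ _)
            (Continuous.intervalIntegrable (by fun_prop) _ _) fun y hy => ?_
          have hsin := mul_le_mul_of_nonneg_left (Real.mul_le_sin hy.1 hy.2) hA.le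
          exact Real.exp_le_exp.2 (by linear_combination hsin)
      _ = π / (2 * A) * (1 - Real.exp (-A)) := by
          have hc : -(2 * A / π) ≠ 0 := by simp [hA.ne', Real.pi_ne_zero]
          rw [intervalIntegral.integral_comp_mul_left _ hc, integral_exp,
            mul_zero, Real.exp_zero, smul_eq_mul]
          field_simp
          ring
      _ ≤ π / (2 * A) := mul_le_of_le_one_right (by positivity) (by linarith [Real.exp_pos (-A)])
  rw [← intervalIntegral.integral_add_adjacent_intervals (hint 0 (π / 2)) (hint _ π), hsymm]
  calc _ ≤ π / (2 * A) + π / (2 * A) := add_le_add hhalf hhalf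
    _ = π / A := by field_simp; norm_num

section Substitution

variable {E : Type*} [NormedAddCommGroup E] [NormedSpace ℝ E]

lemma tendsto_integral_atTop_iff_comp_exp {g : ℝ → E} {l : E}
    (hg : ContinuousOn g (Set.Ioi 0)) (hg01 : IntervalIntegrable g volume 0 1) :
    Tendsto (fun T : ℝ => ∫ t in (0 : ℝ)..T, g t) atTop (𝓝 l) ↔
      Tendsto (fun R : ℝ => ∫ x in (-R)..R, Real.exp x • g (Real.exp x)) atTop (𝓝 l) := by
  have hint {b : ℝ} (hb : 0 < b) : IntervalIntegrable g volume 0 b :=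
    hg01.trans (hg.mono fun t ht => (lt_min one_pos hb).trans_le ht.1).intervalIntegrable
  have hsubst (R : ℝ) : ∫ x in (-R)..R, Real.exp x • g (Real.exp x) =
      (∫ t in (0 : ℝ)..Real.exp R, g t) - ∫ t in (0 : ℝ)..Real.exp (-R), g t := by
    rw [intervalIntegral.integral_interval_sub_left (hint (Real.exp_pos R))
      (hint (Real.exp_pos (-R)))]
    exact intervalIntegral.integral_deriv_smul_comp' (fun x _ => Real.hasDerivAt_exp x)
      (by fun_prop) (hg.mono (by rintro _ ⟨x, -, rfl⟩; exact Real.exp_pos x))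
  have hsmall : Tendsto (fun R : ℝ => ∫ t in (0 : ℝ)..Real.exp (-R), g t) atTop (𝓝 0) := by
    have hprim := intervalIntegral.continuousOn_primitive_interval' hg01 Set.left_mem_uIcc
      0 Set.left_mem_uIcc
    rw [ContinuousWithinAt, intervalIntegral.integral_same] at hprim
    refine hprim.comp (tendsto_nhdsWithin_iff.2 ⟨Real.tendsto_exp_neg_atTop_nhds_zero, ?_⟩)
    filter_upwards [eventually_ge_atTop 0] with R hR
    rw [Set.uIcc_of_le zero_le_one]
    exact ⟨(Real.exp_pos _).le, Real.exp_le_one_iff.2 (neg_nonpos.2 hR)⟩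
  rw [← Real.tendsto_comp_exp_atTop]
  constructor <;> intro h
  · simpa only [hsubst, sub_zero] using h.sub hsmall
  · simpa only [hsubst, sub_add_cancel, add_zero] using h.add hsmall

end Substitution

lemma continuousOn_log_Ioi : ContinuousOn Real.log (Set.Ioi 0) :=
  Real.continuousOn_log.mono fun _ ht => ht.ne'

lemma tendsto_integral_comp_exp_W {lam : ℝ} (hlam : 0 < lam) :
    Tendsto (fun R : ℝ => ∫ x in (-R)..R,
      Real.exp x * (Real.exp (-lam * Real.exp x) / (x ^ 2 + π ^ 2))) atTop (𝓝 (W lam)) := by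
  have hcont : ContinuousOn (fun u => Real.exp (-lam * u) / (Real.log u ^ 2 + π ^ 2))
      (Set.Ioi 0) :=
    ContinuousOn.div (by fun_prop) ((continuousOn_log_Ioi.pow 2).add continuousOn_const)
      fun u _ => by positivity
  have hint : IntegrableOn (fun u => Real.exp (-lam * u) / (Real.log u ^ 2 + π ^ 2))
      (Set.Ioi 0) := by
    refine Integrable.mono' ((integrableOn_exp_mul_Ioi (neg_lt_zero.2 hlam) 0).div_const (π ^ 2))
      (hcont.aestronglyMeasurable measurableSet_Ioi) (ae_of_all _ fun u => ?_)
    rw [Real.norm_of_nonneg (by positivity)]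
    gcongr
    exact le_add_of_nonneg_left (sq_nonneg _)
  have hW := intervalIntegral_tendsto_integral_Ioi 0 hint tendsto_id
  simpa only [W, Real.log_exp, smul_eq_mul] using (tendsto_integral_atTop_iff_comp_exp hcont
    ((intervalIntegrable_iff_integrableOn_Ioc_of_le zero_le_one).2
      (hint.mono_set Set.Ioc_subset_Ioi_self))).1 hW

lemma re_div_add_mul_I (w : ℂ) (x c : ℝ) :
    (w / (x + c * I)).re = (x * w.re + c * w.im) / (x ^ 2 + c ^ 2) := by
  rw [div_re, normSq_add_mul_I]
  simp only [add_re, add_im, ofReal_re, ofReal_im, re_ofReal_mul, im_ofReal_mul, I_re, I_im,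
    mul_zero, mul_one, add_zero, zero_add]
  ring

/-- The pullback of the form `exp (i λ z) dz` under `z = exp s`. The logarithm turns the upper
half-plane into the strip `0 ≤ im s ≤ π`, on which `log z ± i π / 2` becomes `s ± i π / 2`. -/
noncomputable def logFourierKernel (lam : ℝ) (s : ℂ) : ℂ :=
  cexp (lam * I * cexp s) * cexp s

lemma differentiable_logFourierKernel (lam : ℝ) : Differentiable ℂ (logFourierKernel lam) := by
  unfold logFourierKernel
  fun_prop

lemma norm_logFourierKernel (lam X y : ℝ) :
    ‖logFourierKernel lam (X + y * I)‖ =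
      Real.exp X * Real.exp (-(lam * Real.exp X * Real.sin y)) := by
  rw [logFourierKernel, norm_mul, norm_exp, norm_exp, mul_comm]
  simp [exp_re, exp_im, mul_assoc]

lemma integral_norm_logFourierKernel_le {lam b : ℝ} (hlam : 0 < lam) (hb : b ∈ Set.Icc 0 π)
    (X : ℝ) :
    ∫ y in (0 : ℝ)..b, ‖logFourierKernel lam (X + y * I)‖ ≤ π / lam := by
  simp only [norm_logFourierKernel, intervalIntegral.integral_const_mul]
  calc _ ≤ Real.exp X * ∫ y in (0 : ℝ)..π, Real.exp (-(lam * Real.exp X * Real.sin y)) := by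
        gcongr
        exact intervalIntegral.integral_mono_interval le_rfl hb.1 hb.2
          (ae_of_all _ fun y => (Real.exp_pos _).le)
          (Continuous.intervalIntegrable (by fun_prop) _ _)
    _ ≤ Real.exp X * (π / (lam * Real.exp X)) := by
        gcongr
        exact integral_exp_neg_mul_sin_le (by positivity)
    _ = π / lam := by field_simp

lemma logFourierKernel_ofReal_re (lam x : ℝ) :
    (logFourierKernel lam x).re = Real.exp x * Real.cos (lam * Real.exp x) := by
  simp [logFourierKernel, ← ofReal_exp, exp_re, mul_comm]

lemma logFourierKernel_add_pi_div_two_mul_I (lam : ℝ) (s : ℂ) :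
    logFourierKernel lam (s + (π / 2 : ℝ) * I) = cexp s * cexp (-lam * cexp s) * I := by
  have hrot : cexp (s + (π / 2 : ℝ) * I) = cexp s * I := by
    rw [Complex.exp_add]
    push_cast
    rw [exp_pi_div_two_mul_I]
  have harg : lam * I * (cexp s * I) = -lam * cexp s := by
    linear_combination (lam * cexp s) * I_mul_I
  rw [logFourierKernel, hrot, harg]
  ring

-- Under `z = exp s`, the map `s ↦ conj s + π i` is the reflection `z ↦ -conj z`.
lemma logFourierKernel_conj_add_pi_mul_I (lam : ℝ) (s : ℂ) :
    logFourierKernel lam (conj s + π * I) = -conj (logFourierKernel lam s) := by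
  simp [logFourierKernel, Complex.exp_add, exp_pi_mul_I, ← exp_conj]

lemma re_integral_logFourierKernel_add_pi_div_two_mul_I (lam R : ℝ) :
    (∫ x in (-R)..R, logFourierKernel lam (x + (π / 2 : ℝ) * I) /
      (x + (π / 2 : ℝ) * I + (π / 2 : ℝ) * I)).re =
      π * ∫ x in (-R)..R, Real.exp x * (Real.exp (-lam * Real.exp x) / (x ^ 2 + π ^ 2)) := by
  have hcont : Continuous fun x : ℝ => logFourierKernel lam (x + (π / 2 : ℝ) * I) /
      (x + (π / 2 : ℝ) * I + (π / 2 : ℝ) * I) :=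
    ((differentiable_logFourierKernel lam).continuous.comp (by fun_prop)).div (by fun_prop)
      fun x h => Real.pi_ne_zero (by simpa using congrArg im h)
  rw [← intervalIntegral.integral_const_mul, ← reCLM_apply,
    ← reCLM.intervalIntegral_comp_comm (hcont.intervalIntegrable _ _)]
  refine intervalIntegral.integral_congr fun x _ => ?_
  have hden : (x : ℂ) + (π / 2 : ℝ) * I + (π / 2 : ℝ) * I = x + π * I := by
    push_cast
    ring
  have hnum : logFourierKernel lam (x + (π / 2 : ℝ) * I) =
      (Real.exp x * Real.exp (-lam * Real.exp x) : ℝ) * I := by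
    rw [logFourierKernel_add_pi_div_two_mul_I]
    push_cast
    rfl
  simp only [reCLM_apply, hden, hnum, re_div_add_mul_I, re_ofReal_mul, im_ofReal_mul, I_re, I_im]
  ring

lemma tendsto_re_integral_logFourierKernel_div_add {lam : ℝ} (hlam : 0 < lam) :
    Tendsto (fun R : ℝ => (∫ x in (-R)..R,
      logFourierKernel lam x / (x + (π / 2 : ℝ) * I)).re) atTop (𝓝 (π * W lam)) := by
  have hstrip := tendsto_integral_div_sub_of_notMem (α := -(π / 2)) Real.pi_div_two_pos.le
    (by simp [Set.uIcc_of_le Real.pi_div_two_pos.le, Real.pi_pos])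
    (differentiable_logFourierKernel lam).differentiableOn
    (integral_norm_logFourierKernel_le hlam ⟨Real.pi_div_two_pos.le, half_le_self Real.pi_pos.le⟩)
  simp only [ofReal_neg, neg_mul, sub_neg_eq_add] at hstrip
  have hre := ((continuous_re.tendsto 0).comp hstrip).add
    ((tendsto_integral_comp_exp_W hlam).const_mul π)
  simpa only [Function.comp_def, sub_re,
    re_integral_logFourierKernel_add_pi_div_two_mul_I, sub_add_cancel, zero_re, zero_add] using hre

lemma tendsto_re_integral_logFourierKernel_div_sub {lam : ℝ} (hlam : 0 < lam) :
    Tendsto (fun R : ℝ => (∫ x in (-R)..R,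
      logFourierKernel lam x / (x - (π / 2 : ℝ) * I)).re) atTop (𝓝 (-(π * Real.exp (-lam)))) := by
  have htop (R : ℝ) : ∫ x in (-R)..R,
      logFourierKernel lam (x + π * I) / (x + π * I - (π / 2 : ℝ) * I) =
      -conj (∫ x in (-R)..R, logFourierKernel lam x / (x - (π / 2 : ℝ) * I)) := by
    rw [← intervalIntegral.intervalIntegral_conj, ← intervalIntegral.integral_neg]
    refine intervalIntegral.integral_congr fun x _ => ?_
    have hK := logFourierKernel_conj_add_pi_mul_I lam x
    rw [conj_ofReal] at hK
    simp only [hK, map_div₀, map_sub, map_mul, conj_ofReal, conj_I, neg_div]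
    congr 2
    push_cast
    ring
  have hresidue : logFourierKernel lam ((π / 2 : ℝ) * I) = Real.exp (-lam) * I := by
    simpa using logFourierKernel_add_pi_div_two_mul_I lam 0
  have hstrip := tendsto_integral_div_sub_of_mem_Ioo (α := π / 2) (b := π)
    ⟨Real.pi_div_two_pos, half_lt_self Real.pi_pos⟩
    (differentiable_logFourierKernel lam).differentiableOn
    (integral_norm_logFourierKernel_le hlam ⟨Real.pi_pos.le, le_rfl⟩)
  simp only [htop, sub_neg_eq_add, add_conj, hresidue] at hstrip
  have hre := ((continuous_re.tendsto _).comp hstrip).div_const 2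
  simp only [Function.comp_def, ofReal_re, mul_div_cancel_left₀ _ (two_ne_zero' ℝ)] at hre
  have hvalue : 2 * π * I * (Real.exp (-lam) * I) = (-(2 * π * Real.exp (-lam)) : ℝ) := by
    push_cast
    linear_combination (2 * π * cexp (-lam)) * I_mul_I
  simp only [hvalue, ofReal_re] at hre
  convert hre using 2
  ring

lemma integral_log_mul_cos_comp_exp (lam R : ℝ) :
    ∫ x in (-R)..R, Real.exp x * (x * Real.cos (lam * Real.exp x) / (x ^ 2 + π ^ 2 / 4)) =
      ((∫ x in (-R)..R, logFourierKernel lam x / (x + (π / 2 : ℝ) * I)).re +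
        (∫ x in (-R)..R, logFourierKernel lam x / (x - (π / 2 : ℝ) * I)).re) / 2 := by
  have hK := (differentiable_logFourierKernel lam).continuous.comp continuous_ofReal
  have hadd : Continuous fun x : ℝ => logFourierKernel lam x / (x + (π / 2 : ℝ) * I) :=
    hK.div (by fun_prop) fun x h => Real.pi_ne_zero (by simpa using congrArg im h)
  have hsub : Continuous fun x : ℝ => logFourierKernel lam x / (x - (π / 2 : ℝ) * I) :=
    hK.div (by fun_prop) fun x h => Real.pi_ne_zero (by simpa using congrArg im h)
  have hsum : Continuous fun x : ℝ => logFourierKernel lam x / (x + (π / 2 : ℝ) * I) +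
      logFourierKernel lam x / (x - (π / 2 : ℝ) * I) := hadd.add hsub
  rw [← add_re, ← intervalIntegral.integral_add (hadd.intervalIntegrable _ _)
    (hsub.intervalIntegrable _ _), ← reCLM_apply, ← reCLM.intervalIntegral_comp_comm
    (hsum.intervalIntegrable _ _), ← intervalIntegral.integral_div]
  refine intervalIntegral.integral_congr fun x _ => ?_
  have hconj : (x : ℂ) - (π / 2 : ℝ) * I = x + (-(π / 2) : ℝ) * I := by
    push_cast
    ring
  simp only [reCLM_apply, add_re, hconj, re_div_add_mul_I, logFourierKernel_ofReal_re]
  ring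

lemma continuousOn_log_mul_cos_div (lam : ℝ) :
    ContinuousOn (fun t => Real.log t * Real.cos (lam * t) / (Real.log t ^ 2 + π ^ 2 / 4))
      (Set.Ioi 0) :=
  (continuousOn_log_Ioi.mul (by fun_prop)).div
    ((continuousOn_log_Ioi.pow 2).add continuousOn_const) fun t _ => by positivity

lemma intervalIntegrable_log_mul_cos_div (lam : ℝ) :
    IntervalIntegrable
      (fun t => Real.log t * Real.cos (lam * t) / (Real.log t ^ 2 + π ^ 2 / 4)) volume 0 1 := by
  rw [intervalIntegrable_iff_integrableOn_Ioc_of_le zero_le_one]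
  refine IntegrableOn.of_bound (C := 1) (by simp)
    (((continuousOn_log_mul_cos_div lam).mono Set.Ioc_subset_Ioi_self).aestronglyMeasurable
      measurableSet_Ioc) (ae_of_all _ fun t => ?_)
  rw [norm_div, norm_mul, Real.norm_of_nonneg (by positivity : 0 ≤ Real.log t ^ 2 + π ^ 2 / 4),
    div_le_one (by positivity), Real.norm_eq_abs, ← sq_abs (Real.log t)]
  calc |Real.log t| * ‖Real.cos (lam * t)‖ ≤ |Real.log t| :=
        mul_le_of_le_one_right (abs_nonneg _) (Real.abs_cos_le_one _)
    _ ≤ |Real.log t| ^ 2 + π ^ 2 / 4 := by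
        nlinarith [sq_nonneg (|Real.log t| - 1 / 2), Real.pi_gt_three]

theorem stmt14 (lam : ℝ) (hlam : 0 < lam) :
    Tendsto
      (fun T : ℝ => 2 / Real.pi *
        ∫ t in (0 : ℝ)..T,
          Real.log t * Real.cos (lam * t) / ((Real.log t) ^ 2 + Real.pi ^ 2 / 4))
      atTop (nhds (W lam - Real.exp (-lam))) := by
  have hlim : Tendsto (fun R : ℝ => ∫ x in (-R)..R,
      Real.exp x * (x * Real.cos (lam * Real.exp x) / (x ^ 2 + π ^ 2 / 4))) atTop
      (𝓝 ((π * W lam + -(π * Real.exp (-lam))) / 2)) := by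
    simp only [integral_log_mul_cos_comp_exp]
    exact ((tendsto_re_integral_logFourierKernel_div_add hlam).add
      (tendsto_re_integral_logFourierKernel_div_sub hlam)).div_const 2
  have hcos := (tendsto_integral_atTop_iff_comp_exp (continuousOn_log_mul_cos_div lam)
    (intervalIntegrable_log_mul_cos_div lam)).2 (by simpa only [Real.log_exp, smul_eq_mul])
  convert hcos.const_mul (2 / π) using 2
  field_simp
  ring
end

section
/- For x > 0 and u ∈ ℝ, K₀(x√(2iu)) = (1/2) ∫_0^∞ exp(−y − i x² u/(2y)) · y^{-1} dy, where K₀ is the modified Bessel function of the second kind of order 0 and √ denotes the principal branch. -/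
/-!
Substituting `y = (‖z‖ / 2) e ^ s` gives `y + z² / (4 y) = z cosh (s - i arg z)`, so the integral
over `y` is that of the entire function `ζ ↦ exp (-z cosh ζ)` along the line `Im ζ = -arg z`. Since
`2 Re (z cosh (s + iφ)) = ‖z‖ (e ^ s cos (arg z + φ) + e ^ (-s) cos (arg z - φ))`, the condition
`|arg z| ≤ π / 4` keeps both cosines nonnegative for `φ` between `0` and `-arg z`, and Cauchy's
theorem moves the contour to the real line, where the integral is `2 K₀ z`. When `|arg z| = π / 4`
the integral over `y` converges only conditionally at `0`; there the truncation `y > ε` becomes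
`s > L` with `L → -∞`, and the vertical edge at `s = L` vanishes by dominated convergence.
-/

open Filter Complex

/-- The modified Bessel function of the second kind of order 0, via
`K₀ z = ∫_0^∞ e^{-z cosh t} dt`, convergent for `Re z > 0` (and in particular
for `z = x√(2iu)`, which has `arg z = ±π/4`). -/
noncomputable def besselK0 (z : ℂ) : ℂ :=
  ∫ t in Set.Ioi (0 : ℝ), Complex.exp (-z * Real.cosh t)

open MeasureTheory Set Topology
open scoped Real

section ContourShift

variable {E : Type*} [NormedAddCommGroup E] [NormedSpace ℂ E] {f : ℂ → E} {b : ℝ}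

theorem integral_Ioi_add_mul_I_eq_sub (hf : Differentiable ℂ f) {L : ℝ}
    (hreal : IntegrableOn (fun s : ℝ => f s) (Ioi L))
    (hshift : IntegrableOn (fun s : ℝ => f (s + b * I)) (Ioi L))
    (htop : Tendsto (fun R : ℝ => ∫ φ in (0 : ℝ)..b, f (R + φ * I)) atTop (𝓝 0)) :
    ∫ s in Ioi L, f (s + b * I) =
      (∫ s : ℝ in Ioi L, f s) - I • ∫ φ in (0 : ℝ)..b, f (L + φ * I) := by
  have rectangle (R : ℝ) :
      (∫ s : ℝ in L..R, f s) - (∫ s : ℝ in L..R, f (s + b * I)) +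
        I • (∫ φ in (0 : ℝ)..b, f (R + φ * I)) - I • ∫ φ in (0 : ℝ)..b, f (L + φ * I) = 0 := by
    simpa using integral_boundary_rect_eq_zero_of_differentiableOn f L (R + b * I)
      hf.differentiableOn
  have hlim := (((intervalIntegral_tendsto_integral_Ioi L hreal tendsto_id).sub
    (intervalIntegral_tendsto_integral_Ioi L hshift tendsto_id)).add
    (htop.const_smul I)).sub_const (I • ∫ φ in (0 : ℝ)..b, f (L + φ * I))
  simp only [id, rectangle, smul_zero, add_zero] at hlim
  have hzero := tendsto_nhds_unique hlim tendsto_const_nhds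
  rw [sub_right_comm] at hzero
  exact (sub_eq_zero.1 hzero).symm

theorem tendsto_integral_Ioi_add_mul_I_atBot (hf : Differentiable ℂ f)
    (hreal : Integrable fun s : ℝ => f s)
    (hshift : ∀ L : ℝ, IntegrableOn (fun s : ℝ => f (s + b * I)) (Ioi L))
    (htop : Tendsto (fun R : ℝ => ∫ φ in (0 : ℝ)..b, f (R + φ * I)) atTop (𝓝 0))
    (hbot : Tendsto (fun L : ℝ => ∫ φ in (0 : ℝ)..b, f (L + φ * I)) atBot (𝓝 0)) :
    Tendsto (fun L : ℝ => ∫ s in Ioi L, f (s + b * I)) atBot (𝓝 (∫ s : ℝ, f s)) := by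
  have hline : Tendsto (fun L : ℝ => ∫ s : ℝ in Ioi L, f s) atBot (𝓝 (∫ s : ℝ, f s)) :=
    (aecover_Ioi tendsto_id).integral_tendsto_of_countably_generated hreal
  simpa only [integral_Ioi_add_mul_I_eq_sub hf hreal.integrableOn (hshift _) htop, smul_zero,
    sub_zero] using hline.sub (hbot.const_smul I)

end ContourShift

section ExpNegMulCosh

variable {z : ℂ} {φ : ℝ}

theorem re_mul_cosh_add_mul_I (z : ℂ) (s φ : ℝ) :
    (z * Complex.cosh (s + φ * I)).re =
      ‖z‖ / 2 * (Real.cos (z.arg + φ) * Real.exp s + Real.cos (z.arg - φ) * Real.exp (-s)) := by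
  have hsplit : z * Complex.cosh (s + φ * I) = (‖z‖ / 2 : ℝ) *
      (Complex.exp (s + (z.arg + φ : ℝ) * I) +
        Complex.exp ((-s : ℝ) + (z.arg - φ : ℝ) * I)) := by
    conv_lhs => rw [← norm_mul_exp_arg_mul_I z, Complex.cosh]
    rw [show (s + (z.arg + φ : ℝ) * I : ℂ) = z.arg * I + (s + φ * I) by push_cast; ring,
      show ((-s : ℝ) + (z.arg - φ : ℝ) * I : ℂ) = z.arg * I + -(s + φ * I) by push_cast; ring,
      Complex.exp_add (z.arg * I), Complex.exp_add (z.arg * I)]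
    push_cast
    ring
  rw [hsplit, re_ofReal_mul]
  simp [Complex.exp_re, mul_comm]

theorem norm_exp_neg_mul_cosh_le (s : ℝ) (hsub : 0 ≤ Real.cos (z.arg - φ)) :
    ‖Complex.exp (-z * Complex.cosh (s + φ * I))‖ ≤
      Real.exp (-(‖z‖ / 2 * Real.cos (z.arg + φ) * Real.exp s)) := by
  rw [Complex.norm_exp, Real.exp_le_exp, neg_mul, neg_re, re_mul_cosh_add_mul_I, neg_le_neg_iff,
    mul_add, mul_assoc]
  exact le_add_of_nonneg_right (by positivity)

theorem norm_exp_neg_mul_cosh_le_one (s : ℝ) (hadd : 0 ≤ Real.cos (z.arg + φ))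
    (hsub : 0 ≤ Real.cos (z.arg - φ)) :
    ‖Complex.exp (-z * Complex.cosh (s + φ * I))‖ ≤ 1 :=
  (norm_exp_neg_mul_cosh_le s hsub).trans <|
    Real.exp_le_one_iff.2 (neg_nonpos.2 (by positivity))

theorem tendsto_exp_neg_mul_cosh_atTop (hz : z ≠ 0) (hadd : 0 < Real.cos (z.arg + φ))
    (hsub : 0 ≤ Real.cos (z.arg - φ)) :
    Tendsto (fun s : ℝ => Complex.exp (-z * Complex.cosh (s + φ * I))) atTop (𝓝 0) :=
  squeeze_zero_norm (norm_exp_neg_mul_cosh_le · hsub) <|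
    Real.tendsto_exp_neg_atTop_nhds_zero.comp <|
      Real.tendsto_exp_atTop.const_mul_atTop (by positivity)

theorem tendsto_exp_neg_mul_cosh_atBot (hz : z ≠ 0) (hadd : 0 ≤ Real.cos (z.arg + φ))
    (hsub : 0 < Real.cos (z.arg - φ)) :
    Tendsto (fun s : ℝ => Complex.exp (-z * Complex.cosh (s + φ * I))) atBot (𝓝 0) := by
  have hreflect := (tendsto_exp_neg_mul_cosh_atTop (φ := -φ) hz hsub
    (by rwa [sub_neg_eq_add])).comp tendsto_neg_atBot_atTop
  refine hreflect.congr fun s => ?_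
  rw [Function.comp_apply, ← Complex.cosh_neg]
  push_cast
  ring_nf

theorem integrableOn_exp_neg_mul_exp_Ioi {c : ℝ} (hc : 0 < c) (L : ℝ) :
    IntegrableOn (fun s : ℝ => Real.exp (-(c * Real.exp s))) (Ioi L) := by
  refine (integrableOn_exp_mul_Ioi (neg_neg_of_pos hc) L).mono'
    (by fun_prop) (ae_of_all _ fun s => ?_)
  rw [Real.norm_of_nonneg (Real.exp_nonneg _), Real.exp_le_exp, neg_mul, neg_le_neg_iff]
  gcongr
  linarith [Real.add_one_le_exp s]

theorem integrableOn_exp_neg_mul_cosh_Ioi (hz : z ≠ 0) (hadd : 0 < Real.cos (z.arg + φ))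
    (hsub : 0 ≤ Real.cos (z.arg - φ)) (L : ℝ) :
    IntegrableOn (fun s : ℝ => Complex.exp (-z * Complex.cosh (s + φ * I))) (Ioi L) :=
  (integrableOn_exp_neg_mul_exp_Ioi (mul_pos (by positivity) hadd) L).mono'
    (Continuous.aestronglyMeasurable (by fun_prop))
    (ae_of_all _ (norm_exp_neg_mul_cosh_le · hsub))

theorem integrable_exp_neg_mul_cosh (hz : 0 < z.re) :
    Integrable fun t : ℝ => Complex.exp (-z * Complex.cosh t) := by
  have hz0 : z ≠ 0 := ne_of_apply_ne re hz.ne'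
  have hcos : 0 < Real.cos z.arg := by
    rw [cos_arg hz0]
    positivity
  have hright : IntegrableOn (fun t : ℝ => Complex.exp (-z * Complex.cosh t)) (Ioi 0) := by
    simpa using integrableOn_exp_neg_mul_cosh_Ioi (φ := 0) hz0 (by simpa) (by simpa using hcos.le) 0
  have hcont : Continuous fun t : ℝ => Complex.exp (-z * Complex.cosh t) := by fun_prop
  exact hcont.locallyIntegrable.integrable_of_isBigO_atTop_of_norm_isNegInvariant
    (ae_of_all _ fun t => by simp)
    (Asymptotics.isBigO_refl _ _) ⟨Ioi 0, Ioi_mem_atTop 0, hright⟩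

theorem integral_exp_neg_mul_cosh (hz : 0 < z.re) :
    ∫ t : ℝ, Complex.exp (-z * Complex.cosh t) = 2 * besselK0 z := by
  have hint := integrable_exp_neg_mul_cosh hz
  have hright : ∫ t : ℝ in Ioi 0, Complex.exp (-z * Complex.cosh t) = besselK0 z := by
    simp only [besselK0, ofReal_cosh]
  have hleft : ∫ t : ℝ in Iic 0, Complex.exp (-z * Complex.cosh t) = besselK0 z := by
    rw [← hright]
    simpa using integral_comp_neg_Iic (0 : ℝ) fun t : ℝ => Complex.exp (-z * Complex.cosh t)
  rw [← intervalIntegral.integral_Iic_add_Ioi hint.integrableOn hint.integrableOn, hleft, hright,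
    two_mul]

theorem tendsto_intervalIntegral_exp_neg_mul_cosh {l : Filter ℝ} [l.IsCountablyGenerated] {b : ℝ}
    (hadd : ∀ φ ∈ uIoc 0 b, 0 ≤ Real.cos (z.arg + φ))
    (hsub : ∀ φ ∈ uIoc 0 b, 0 ≤ Real.cos (z.arg - φ))
    (hlim : ∀ᵐ φ : ℝ, φ ∈ uIoc 0 b →
      Tendsto (fun s : ℝ => Complex.exp (-z * Complex.cosh (s + φ * I))) l (𝓝 0)) :
    Tendsto (fun s : ℝ => ∫ φ in (0 : ℝ)..b, Complex.exp (-z * Complex.cosh (s + φ * I)))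
      l (𝓝 0) := by
  have hdct := intervalIntegral.tendsto_integral_filter_of_dominated_convergence (fun _ => 1)
    (Eventually.of_forall fun s : ℝ => Continuous.aestronglyMeasurable (by fun_prop))
    (Eventually.of_forall fun s => ae_of_all _ fun φ hφ =>
      norm_exp_neg_mul_cosh_le_one s (hadd φ hφ) (hsub φ hφ))
    intervalIntegrable_const hlim
  simpa using hdct

end ExpNegMulCosh

section Sector

variable {θ φ : ℝ}

theorem cos_add_pos_of_mem_uIcc_zero_neg (hθ : |θ| < π / 2) (hφ : φ ∈ uIcc 0 (-θ)) :
    0 < Real.cos (θ + φ) := by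
  have hle : |θ + φ| ≤ |θ| := by
    have hdist := abs_sub_right_of_mem_uIcc hφ
    rwa [sub_zero, abs_neg, ← neg_add', abs_neg] at hdist
  exact Real.cos_pos_of_mem_Ioo (abs_lt.1 (hle.trans_lt hθ))

theorem cos_sub_nonneg_of_mem_uIcc_zero_neg (hθ : |θ| ≤ π / 4) (hφ : φ ∈ uIcc 0 (-θ)) :
    0 ≤ Real.cos (θ - φ) := by
  have hle : |φ| ≤ |θ| := by simpa using abs_sub_left_of_mem_uIcc hφ
  refine Real.cos_nonneg_of_mem_Icc (abs_le.1 ?_)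
  linarith [abs_sub θ φ]

theorem cos_sub_pos_of_mem_uIcc_zero_neg (hθ : |θ| ≤ π / 4) (hφ : φ ∈ uIcc 0 (-θ))
    (hne : φ ≠ -θ) : 0 < Real.cos (θ - φ) := by
  have hbounds := abs_le.1 hθ
  have := Real.pi_pos
  refine Real.cos_pos_of_mem_Ioo ?_
  rcases mem_uIcc.1 hφ with ⟨hnonneg, hle⟩ | ⟨hge, hnonpos⟩
  · have hlt := hle.lt_of_ne hne
    constructor <;> linarith
  · have hgt := hge.lt_of_ne' hne
    constructor <;> linarith

end Sector

section Rotation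

variable {z : ℂ}

theorem tendsto_intervalIntegral_exp_neg_mul_cosh_atTop (hz : z ≠ 0) (harg : |z.arg| ≤ π / 4) :
    Tendsto (fun s : ℝ => ∫ φ in (0 : ℝ)..-z.arg, Complex.exp (-z * Complex.cosh (s + φ * I)))
      atTop (𝓝 0) := by
  have hadd (φ : ℝ) (hφ : φ ∈ uIoc 0 (-z.arg)) : 0 < Real.cos (z.arg + φ) :=
    cos_add_pos_of_mem_uIcc_zero_neg (by linarith [Real.pi_pos]) (uIoc_subset_uIcc hφ)
  have hsub (φ : ℝ) (hφ : φ ∈ uIoc 0 (-z.arg)) : 0 ≤ Real.cos (z.arg - φ) :=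
    cos_sub_nonneg_of_mem_uIcc_zero_neg harg (uIoc_subset_uIcc hφ)
  exact tendsto_intervalIntegral_exp_neg_mul_cosh (fun φ hφ => (hadd φ hφ).le) hsub
    (ae_of_all _ fun φ hφ => tendsto_exp_neg_mul_cosh_atTop hz (hadd φ hφ) (hsub φ hφ))

theorem tendsto_intervalIntegral_exp_neg_mul_cosh_atBot (hz : z ≠ 0) (harg : |z.arg| ≤ π / 4) :
    Tendsto (fun s : ℝ => ∫ φ in (0 : ℝ)..-z.arg, Complex.exp (-z * Complex.cosh (s + φ * I)))
      atBot (𝓝 0) := by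
  have hadd (φ : ℝ) (hφ : φ ∈ uIoc 0 (-z.arg)) : 0 ≤ Real.cos (z.arg + φ) :=
    (cos_add_pos_of_mem_uIcc_zero_neg (by linarith [Real.pi_pos]) (uIoc_subset_uIcc hφ)).le
  have hsub (φ : ℝ) (hφ : φ ∈ uIoc 0 (-z.arg)) : 0 ≤ Real.cos (z.arg - φ) :=
    cos_sub_nonneg_of_mem_uIcc_zero_neg harg (uIoc_subset_uIcc hφ)
  -- For `arg z = ±π/4` the integrand does not decay at the corner `φ = -arg z`, a null set.
  refine tendsto_intervalIntegral_exp_neg_mul_cosh hadd hsub ?_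
  filter_upwards [volume.ae_ne (-z.arg)] with φ hne hφ
  exact tendsto_exp_neg_mul_cosh_atBot hz (hadd φ hφ)
    (cos_sub_pos_of_mem_uIcc_zero_neg harg (uIoc_subset_uIcc hφ) hne)

theorem tendsto_integral_Ioi_exp_neg_mul_cosh_sub_arg (hz : z ≠ 0) (harg : |z.arg| ≤ π / 4) :
    Tendsto (fun L : ℝ => ∫ s : ℝ in Ioi L, Complex.exp (-z * Complex.cosh (s - z.arg * I)))
      atBot (𝓝 (2 * besselK0 z)) := by
  have hshifted (L : ℝ) : IntegrableOn
      (fun s : ℝ => Complex.exp (-z * Complex.cosh (s + (-z.arg : ℝ) * I))) (Ioi L) :=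
    integrableOn_exp_neg_mul_cosh_Ioi hz (by simp)
      (cos_sub_nonneg_of_mem_uIcc_zero_neg harg right_mem_uIcc) L
  have hre : 0 < z.re :=
    (abs_arg_lt_pi_div_two_iff.1 (by linarith [Real.pi_pos])).resolve_right hz
  have hlim := tendsto_integral_Ioi_add_mul_I_atBot
    (f := fun ζ => Complex.exp (-z * Complex.cosh ζ)) (by fun_prop)
    (integrable_exp_neg_mul_cosh hre) hshifted
    (tendsto_intervalIntegral_exp_neg_mul_cosh_atTop hz harg)
    (tendsto_intervalIntegral_exp_neg_mul_cosh_atBot hz harg)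
  simpa only [integral_exp_neg_mul_cosh hre, ofReal_neg, neg_mul _ I, ← sub_eq_add_neg]
    using hlim

end Rotation

theorem mul_cosh_log_sub_arg_mul_I {z : ℂ} (hz : z ≠ 0) {t : ℝ} (ht : 0 < t) :
    z * Complex.cosh (Real.log t - z.arg * I) =
      (‖z‖ / 2 * t : ℝ) + z ^ 2 / (4 * (‖z‖ / 2 * t : ℝ)) := by
  have hnorm : (‖z‖ : ℂ) ≠ 0 := by simpa
  have ht0 : (t : ℂ) ≠ 0 := by exact_mod_cast ht.ne'
  have hlog : Complex.exp (Real.log t) = t := by rw [← ofReal_exp, Real.exp_log ht]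
  have hphase : Complex.exp (z.arg * I) = z / ‖z‖ :=
    eq_div_of_mul_eq hnorm (by rw [mul_comm, norm_mul_exp_arg_mul_I])
  rw [Complex.cosh, neg_sub, Complex.exp_sub, Complex.exp_sub, hlog, hphase]
  push_cast
  field_simp
  ring

theorem integral_Ioi_exp_neg_sub_sq_div_eq {z : ℂ} (hz : z ≠ 0) {ε : ℝ} (hε : 0 < ε) :
    ∫ y : ℝ in Ioi ε, Complex.exp (-y - z ^ 2 / (4 * y)) / y =
      ∫ s : ℝ in Ioi (Real.log ε - Real.log (‖z‖ / 2)),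
        Complex.exp (-z * Complex.cosh (s - z.arg * I)) := by
  have hr : 0 < ‖z‖ / 2 := by positivity
  rw [← Real.log_div hε.ne' hr.ne', ← integral_comp_log_Ioi _ (div_pos hε hr),
    ← mul_div_cancel₀ ε hr.ne', ← integral_comp_mul_left_Ioi' _ _ hr, ← integral_smul,
    mul_div_cancel₀ ε hr.ne']
  refine setIntegral_congr_fun measurableSet_Ioi fun t ht => ?_
  have htpos : 0 < t := (div_pos hε hr).trans ht
  have hnorm : (‖z‖ : ℂ) ≠ 0 := by simpa
  have ht0 : (t : ℂ) ≠ 0 := by exact_mod_cast htpos.ne'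
  simp only [neg_mul, mul_cosh_log_sub_arg_mul_I hz htpos, real_smul, neg_add']
  push_cast
  field_simp

theorem stmt18_general {z : ℂ} (hz : z ≠ 0) (harg : |z.arg| ≤ π / 4) :
    Tendsto
      (fun ε : ℝ => (1 / 2 : ℂ) * ∫ y : ℝ in Ioi ε, Complex.exp (-y - z ^ 2 / (4 * y)) / y)
      (𝓝[>] 0) (𝓝 (besselK0 z)) := by
  have hlog : Tendsto (fun ε => Real.log ε - Real.log (‖z‖ / 2)) (𝓝[>] 0) atBot :=
    tendsto_atBot_add_const_right _ _ Real.tendsto_log_nhdsGT_zero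
  have hlim := ((tendsto_integral_Ioi_exp_neg_mul_cosh_sub_arg hz harg).comp hlog).const_mul
    (1 / 2 : ℂ)
  rw [← mul_assoc, one_div_mul_cancel two_ne_zero, one_mul] at hlim
  refine hlim.congr' ?_
  filter_upwards [self_mem_nhdsWithin] with ε hε
  rw [Function.comp_apply, integral_Ioi_exp_neg_sub_sq_div_eq hz hε]

theorem arg_cpow_one_half (w : ℂ) : arg (w ^ (1 / 2 : ℂ)) = arg w / 2 := by
  rcases eq_or_ne w 0 with rfl | hw
  · simp
  have him : (Complex.log w * (1 / 2 : ℂ)).im = arg w / 2 := by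
    simp [div_eq_mul_inv, ← log_im]
  rw [cpow_def_of_ne_zero hw, ← log_im, log_exp] <;> rw [him]
  · linarith [neg_pi_lt_arg w, Real.pi_pos]
  · linarith [arg_le_pi w, Real.pi_pos]

theorem mul_two_I_mul_cpow_one_half_sq_div (c u y : ℂ) :
    (c * (2 * I * u) ^ (1 / 2 : ℂ)) ^ 2 / (4 * y) = I * c ^ 2 * u / (2 * y) := by
  rw [mul_pow, one_div, cpow_ofNat_inv_pow, ← mul_div_mul_left (I * c ^ 2 * u) _ two_ne_zero]
  ring_nf

theorem abs_arg_ofReal_mul_cpow_one_half_le {x : ℝ} (hx : 0 < x) {w : ℂ} (hw : 0 ≤ w.re) :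
    |arg (x * w ^ (1 / 2 : ℂ))| ≤ π / 4 := by
  rw [arg_real_mul _ hx, arg_cpow_one_half, abs_div, abs_two]
  linarith [abs_arg_le_pi_div_two_iff.2 hw]

theorem stmt18 (x : ℝ) (hx : 0 < x) (u : ℝ) (hu : u ≠ 0) :
    Tendsto
      (fun ε : ℝ => (1 / 2 : ℂ) *
        ∫ y in Set.Ioi ε,
          Complex.exp (-(y : ℂ) - Complex.I * (x : ℂ) ^ 2 * u / (2 * y)) / (y : ℂ))
      (nhdsWithin 0 (Set.Ioi 0))
      (nhds (besselK0 ((x : ℂ) * (2 * Complex.I * u) ^ (1 / 2 : ℂ)))) := by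
  simpa only [mul_two_I_mul_cpow_one_half_sq_div] using stmt18_general
    (by simp [hx.ne', hu]) (abs_arg_ofReal_mul_cpow_one_half_le hx (w := 2 * I * u) (by simp))
end
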